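/- arXiv:1403.7737 — 2 statements merged into one kernel-verified Lean document; each statement's English description precedes it below -/
import Mathlib

section
/- There exists an absolute constant C₀ > 0 such that the following holds (sharpened error bound for leverage-score sampling based least-squares regression). Let X ∈ ℝ^{n×d} (n ≥ d ≥ 2, rank(X) = d), y ∈ ℝ^n, β_lsr = (XᵀX)⁻¹Xᵀy, and ε ∈ (0, 1), and let c ≥ C₀·(d ln d + d/ε). Perform leverage-score sampling with parameter c: with p_i = min{1, c·l_i/d} for the leverage scores l_i of X, keep row i independently with probability p_i and rescale it by 1/√p_i. Then with probability at least 0.8, every minimizer β̃ of the sampled objective β ↦ Σ_{i: δ_i=1} p_i⁻¹·(y_i − x^(i)β)² satisfies both ‖y − Xβ̃‖₂² ≤ (1 + ε)·‖y − Xβ_lsr‖₂² and ‖β_lsr − β̃‖₂² ≤ (ε/σ_min²(X))·‖y − Xβ_lsr‖₂². Moreover, if γ ∈ (0, 1] satisfies ‖UUᵀy‖₂ ≥ γ‖y‖₂, then also ‖β_lsr − β̃‖₂² ≤ ε·κ²(X)·(γ⁻² − 1)·‖β_lsr‖₂². -/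
open Matrix BigOperators
open scoped Classical

/-- Euclidean norm of a real vector. -/
noncomputable def vnorm {m : ℕ} (v : Fin m → ℝ) : ℝ := Real.sqrt (∑ i, v i ^ 2)

/-- Smallest singular value of a real matrix: `min_{‖v‖=1} ‖Xv‖`. -/
noncomputable def sigmaMin {n d : ℕ} (X : Matrix (Fin n) (Fin d) ℝ) : ℝ :=
  sInf {r : ℝ | ∃ v : Fin d → ℝ, vnorm v = 1 ∧ r = vnorm (X.mulVec v)}

/-- Largest singular value of a real matrix: `max_{‖v‖=1} ‖Xv‖`. -/
noncomputable def sigmaMax {n d : ℕ} (X : Matrix (Fin n) (Fin d) ℝ) : ℝ :=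
  sSup {r : ℝ | ∃ v : Fin d → ℝ, vnorm v = 1 ∧ r = vnorm (X.mulVec v)}

/-- Probability of the outcome `e` when `e i = true` independently with probability `p i`. -/
noncomputable def bernWeight {n : ℕ} (p : Fin n → ℝ) (e : Fin n → Bool) : ℝ :=
  ∏ i, if e i then p i else 1 - p i


section PosSemidefPowers

variable {ι : Type*} [Fintype ι] [DecidableEq ι]

/-- Simultaneous diagonalization of the powers of a real positive semidefinite matrix. -/
theorem Matrix.PosSemidef.exists_pow_eq {G : Matrix ι ι ℝ} (hG : G.PosSemidef) :
    ∃ (μ : ι → ℝ) (Q : Matrix ι ι ℝ), (∀ i, 0 ≤ μ i) ∧ Qᵀ * Q = 1 ∧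
      ∀ k : ℕ, G ^ k = Q * diagonal (fun i => μ i ^ k) * Qᵀ := by
  have hQ : ((hG.1.eigenvectorUnitary : Matrix ι ι ℝ))ᵀ * hG.1.eigenvectorUnitary = 1 := by
    simpa [star_eq_conjTranspose] using Unitary.coe_star_mul_self hG.1.eigenvectorUnitary
  have hQ' := mul_eq_one_comm.mp hQ
  refine ⟨hG.1.eigenvalues, (hG.1.eigenvectorUnitary : Matrix ι ι ℝ), hG.eigenvalues_nonneg, hQ,
    fun k => ?_⟩
  set Q : Matrix ι ι ℝ := (hG.1.eigenvectorUnitary : Matrix ι ι ℝ)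
  have hs : G = Q * diagonal hG.1.eigenvalues * Qᵀ := by
    have := hG.1.spectral_theorem
    rw [Unitary.conjStarAlgAut_apply] at this
    simpa [star_eq_conjTranspose, Function.comp_def] using this
  generalize hG.1.eigenvalues = μ at hs
  induction k with
  | zero => simp [hQ']
  | succ k ih =>
    rw [pow_succ, ih]
    nth_rewrite 1 [hs]
    have : Q * diagonal (fun i => μ i ^ k) * Qᵀ * (Q * diagonal μ * Qᵀ)
        = Q * diagonal (fun i => μ i ^ k) * (Qᵀ * Q) * diagonal μ * Qᵀ := by
      simp only [Matrix.mul_assoc]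
    rw [this, hQ, Matrix.mul_one, Matrix.mul_assoc Q, diagonal_mul_diagonal]
    simp only [pow_succ]

theorem Matrix.dotProduct_mul_diagonal_mul_transpose_mulVec (Q : Matrix ι ι ℝ) (μ v : ι → ℝ) :
    v ⬝ᵥ (Q * diagonal μ * Qᵀ) *ᵥ v = ∑ i, μ i * (Qᵀ *ᵥ v) i ^ 2 := by
  rw [← mulVec_mulVec, ← mulVec_mulVec, dotProduct_mulVec, ← mulVec_transpose]
  simp only [dotProduct, mulVec_diagonal]
  exact Finset.sum_congr rfl fun i _ => by ring

theorem Matrix.trace_mul_diagonal_mul_transpose {Q : Matrix ι ι ℝ} (hQ : Qᵀ * Q = 1) (μ : ι → ℝ) :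
    (Q * diagonal μ * Qᵀ).trace = ∑ i, μ i := by
  rw [trace_mul_comm, ← Matrix.mul_assoc, hQ, Matrix.one_mul, trace_diagonal]

/-- Chebyshev's inequality for the moments `v ⬝ᵥ G ^ k *ᵥ v`. -/
theorem Matrix.PosSemidef.moment_mul_moment_le {G : Matrix ι ι ℝ} (hG : G.PosSemidef)
    (v : ι → ℝ) (s t : ℕ) :
    (v ⬝ᵥ G ^ (s + 1) *ᵥ v) * (v ⬝ᵥ G ^ (t + 1) *ᵥ v) ≤
      (v ⬝ᵥ G *ᵥ v) * (v ⬝ᵥ G ^ (s + t + 1) *ᵥ v) := by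
  obtain ⟨μ, Q, hμ, -, hpow⟩ := hG.exists_pow_eq
  have hq : ∀ k, v ⬝ᵥ G ^ k *ᵥ v = ∑ i, μ i ^ k * (Qᵀ *ᵥ v) i ^ 2 := fun k => by
    rw [hpow, dotProduct_mul_diagonal_mul_transpose_mulVec]
  have h1 : v ⬝ᵥ G *ᵥ v = ∑ i, μ i * (Qᵀ *ᵥ v) i ^ 2 := by simpa using hq 1
  rw [hq, hq, hq, h1]
  generalize Qᵀ *ᵥ v = c
  have key : ∀ i j, 0 ≤ (μ i * c i ^ 2) * (μ j * c j ^ 2) *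
      ((μ i ^ s - μ j ^ s) * (μ i ^ t - μ j ^ t)) := fun i j => by
    refine mul_nonneg (mul_nonneg (mul_nonneg (hμ i) (sq_nonneg _))
      (mul_nonneg (hμ j) (sq_nonneg _))) ?_
    rcases le_total (μ i) (μ j) with h | h
    · exact mul_nonneg_of_nonpos_of_nonpos (sub_nonpos.2 (pow_le_pow_left₀ (hμ i) h s))
        (sub_nonpos.2 (pow_le_pow_left₀ (hμ i) h t))
    · exact mul_nonneg (sub_nonneg.2 (pow_le_pow_left₀ (hμ j) h s))
        (sub_nonneg.2 (pow_le_pow_left₀ (hμ j) h t))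
  have hsum := Finset.sum_nonneg fun i (_ : i ∈ Finset.univ) =>
    Finset.sum_nonneg fun j (_ : j ∈ Finset.univ) => key i j
  have expand : ∑ i, ∑ j, (μ i * c i ^ 2) * (μ j * c j ^ 2) *
      ((μ i ^ s - μ j ^ s) * (μ i ^ t - μ j ^ t)) =
      2 * ((∑ i, μ i * c i ^ 2) * ∑ i, μ i ^ (s + t + 1) * c i ^ 2) -
      2 * ((∑ i, μ i ^ (s + 1) * c i ^ 2) * ∑ i, μ i ^ (t + 1) * c i ^ 2) := by
    have e1 : (∑ i, μ i * c i ^ 2) * (∑ i, μ i ^ (s + t + 1) * c i ^ 2) =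
        ∑ i, ∑ j, (μ i * c i ^ 2) * (μ j ^ (s + t + 1) * c j ^ 2) := Finset.sum_mul_sum ..
    have e2 : (∑ i, μ i * c i ^ 2) * (∑ i, μ i ^ (s + t + 1) * c i ^ 2) =
        ∑ i, ∑ j, (μ i ^ (s + t + 1) * c i ^ 2) * (μ j * c j ^ 2) := by
      rw [mul_comm, Finset.sum_mul_sum]
    have e3 : (∑ i, μ i ^ (s + 1) * c i ^ 2) * (∑ i, μ i ^ (t + 1) * c i ^ 2) =
        ∑ i, ∑ j, (μ i ^ (s + 1) * c i ^ 2) * (μ j ^ (t + 1) * c j ^ 2) := Finset.sum_mul_sum ..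
    have e4 : (∑ i, μ i ^ (s + 1) * c i ^ 2) * (∑ i, μ i ^ (t + 1) * c i ^ 2) =
        ∑ i, ∑ j, (μ i ^ (t + 1) * c i ^ 2) * (μ j ^ (s + 1) * c j ^ 2) := by
      rw [mul_comm, Finset.sum_mul_sum]
    rw [two_mul, two_mul]
    nth_rewrite 1 [e1]
    rw [e2]
    nth_rewrite 1 [e3]
    rw [e4]
    simp only [← Finset.sum_add_distrib, ← Finset.sum_sub_distrib]
    exact Finset.sum_congr rfl fun i _ => Finset.sum_congr rfl fun j _ => by ring
  linarith

theorem Matrix.PosSemidef.trace_pow_le {G : Matrix ι ι ℝ} (hG : G.PosSemidef) {g : ℝ}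
    (h : ∀ v : ι → ℝ, v ⬝ᵥ G *ᵥ v ≤ g * (v ⬝ᵥ v)) (k : ℕ) :
    (G ^ k).trace ≤ Fintype.card ι * g ^ k := by
  obtain ⟨μ, Q, hμ, hQ, hpow⟩ := hG.exists_pow_eq
  rw [hpow, trace_mul_diagonal_mul_transpose hQ]
  have hle : ∀ i, μ i ≤ g := fun i => by
    have hi := h (Q *ᵥ Pi.single i 1)
    have h1 := hpow 1
    simp only [pow_one] at h1
    rw [h1, dotProduct_mul_diagonal_mul_transpose_mulVec, mulVec_mulVec, hQ, one_mulVec,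
      dotProduct_mulVec, ← mulVec_transpose, mulVec_mulVec, hQ, one_mulVec] at hi
    simpa [Pi.single_apply] using hi
  calc ∑ i, μ i ^ k ≤ ∑ _i : ι, g ^ k :=
        Finset.sum_le_sum fun i _ => pow_le_pow_left₀ (hμ i) (hle i) k
    _ = _ := by simp

theorem Matrix.PosSemidef.trace_pow_nonneg {G : Matrix ι ι ℝ} (hG : G.PosSemidef) (k : ℕ) :
    0 ≤ (G ^ k).trace := by
  obtain ⟨μ, Q, hμ, hQ, hpow⟩ := hG.exists_pow_eq
  rw [hpow, trace_mul_diagonal_mul_transpose hQ]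
  exact Finset.sum_nonneg fun i _ => pow_nonneg (hμ i) k

theorem Matrix.PosSemidef.inv_pow_le_trace_pow {G : Matrix ι ι ℝ} (hG : G.PosSemidef) {h : ℝ}
    (hh : 0 < h) {v : ι → ℝ} (hv : v ⬝ᵥ G *ᵥ v < h * (v ⬝ᵥ G ^ 2 *ᵥ v)) (k : ℕ) :
    h⁻¹ ^ k ≤ (G ^ k).trace := by
  obtain ⟨μ, Q, hμ, hQ, hpow⟩ := hG.exists_pow_eq
  have h1 : v ⬝ᵥ G *ᵥ v = ∑ i, μ i * (Qᵀ *ᵥ v) i ^ 2 := by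
    conv_lhs => rw [← pow_one G]
    rw [hpow 1, dotProduct_mul_diagonal_mul_transpose_mulVec]
    simp
  rw [h1, hpow 2, dotProduct_mul_diagonal_mul_transpose_mulVec, Finset.mul_sum] at hv
  obtain ⟨i, -, hi⟩ := Finset.exists_lt_of_sum_lt hv
  have hi' : h⁻¹ ≤ μ i := by
    by_contra hlt
    rw [not_le, lt_inv_comm₀] at hlt
    · have : h * μ i ≤ 1 := by
        by_contra hc
        rcases (hμ i).eq_or_lt with h0 | h0
        · simp [← h0] at hi
        · have := mul_lt_mul_of_pos_right hlt h0
          rw [inv_mul_cancel₀ h0.ne'] at this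
          linarith
      have := mul_le_mul_of_nonneg_right this (mul_nonneg (hμ i) (sq_nonneg ((Qᵀ *ᵥ v) i)))
      nlinarith
    · rcases (hμ i).eq_or_lt with h0 | h0
      · simp [← h0] at hi
      · exact h0
    · exact hh
  rw [hpow, trace_mul_diagonal_mul_transpose hQ]
  calc h⁻¹ ^ k ≤ μ i ^ k := pow_le_pow_left₀ (inv_nonneg.2 hh.le) hi' k
    _ ≤ _ := Finset.single_le_sum (f := fun i => μ i ^ k) (fun j _ => pow_nonneg (hμ j) k)
        (Finset.mem_univ i)

end PosSemidefPowers

section RankOne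

variable {ι : Type*} [Fintype ι]

theorem Matrix.IsSymm.dotProduct_mulVec_comm {A : Matrix ι ι ℝ} (hA : A.IsSymm) (v w : ι → ℝ) :
    v ⬝ᵥ A *ᵥ w = A *ᵥ v ⬝ᵥ w := by
  rw [dotProduct_mulVec, ← mulVec_transpose, hA.eq]

theorem Matrix.PosDef.add_smul_vecMulVec {H : Matrix ι ι ℝ} (hH : H.PosDef) (v : ι → ℝ) {s : ℝ}
    (hs : 0 ≤ s) : (H + s • vecMulVec v v).PosDef := by
  refine hH.add_posSemidef (PosSemidef.smul ?_ hs)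
  simpa using posSemidef_vecMulVec_self_star v

variable [DecidableEq ι]

/-- If `H ≥ h` then `H⁻¹ ≤ h⁻¹`, as quadratic forms. -/
theorem Matrix.PosDef.dotProduct_inv_mulVec_le {H : Matrix ι ι ℝ} (hH : H.PosDef) {h : ℝ}
    (h0 : 0 < h) (hle : ∀ z : ι → ℝ, h * (z ⬝ᵥ z) ≤ z ⬝ᵥ H *ᵥ z) (v : ι → ℝ) :
    v ⬝ᵥ H⁻¹ *ᵥ v ≤ h⁻¹ * (v ⬝ᵥ v) := by
  have hu : IsUnit H.det := (Matrix.isUnit_iff_isUnit_det H).1 hH.isUnit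
  have hv : H *ᵥ (H⁻¹ *ᵥ v) = v := by rw [mulVec_mulVec, mul_nonsing_inv _ hu, one_mulVec]
  have h1 := hle (H⁻¹ *ᵥ v)
  rw [hv, dotProduct_comm _ v] at h1
  set w := H⁻¹ *ᵥ v
  have h2 : 0 ≤ (v - h • w) ⬝ᵥ (v - h • w) := by
    simpa using dotProduct_star_self_nonneg (v - h • w)
  have h3 : (v - h • w) ⬝ᵥ (v - h • w) = v ⬝ᵥ v - 2 * h * (v ⬝ᵥ w) + h * (h * (w ⬝ᵥ w)) := by
    simp only [sub_dotProduct, dotProduct_sub, smul_dotProduct, dotProduct_smul, smul_eq_mul,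
      dotProduct_comm w v]
    ring
  rw [inv_mul_eq_div, le_div_iff₀ h0]
  nlinarith

/-- The Sherman–Morrison formula. -/
theorem Matrix.PosDef.inv_add_smul_vecMulVec {H : Matrix ι ι ℝ} (hH : H.PosDef) (v : ι → ℝ) {s : ℝ}
    (hs : 0 ≤ s) : (H + s • vecMulVec v v)⁻¹ =
      H⁻¹ - (s / (1 + s * (v ⬝ᵥ H⁻¹ *ᵥ v))) • vecMulVec (H⁻¹ *ᵥ v) (H⁻¹ *ᵥ v) := by
  have hu : IsUnit H.det := (Matrix.isUnit_iff_isUnit_det H).1 hH.isUnit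
  have hv : H *ᵥ (H⁻¹ *ᵥ v) = v := by rw [mulVec_mulVec, mul_nonsing_inv _ hu, one_mulVec]
  have hsymm : (H⁻¹).IsSymm := by
    simpa [IsHermitian, IsSymm, conjTranspose_eq_transpose_of_trivial] using hH.inv.1
  have hq : 0 ≤ v ⬝ᵥ H⁻¹ *ᵥ v := by simpa using hH.inv.posSemidef.dotProduct_mulVec_nonneg v
  have hvw : vecMulVec v v * H⁻¹ = vecMulVec v (H⁻¹ *ᵥ v) := by
    rw [vecMulVec_mul, ← mulVec_transpose, hsymm.eq]
  refine inv_eq_right_inv ?_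
  rw [mul_sub, add_mul, mul_nonsing_inv _ hu, mul_smul_comm, add_mul, smul_mul_assoc, hvw,
    mul_vecMulVec, hv, smul_mul_assoc, vecMulVec_mul_vecMulVec]
  set q := v ⬝ᵥ H⁻¹ *ᵥ v
  set w := H⁻¹ *ᵥ v
  have hne : 1 + s * q ≠ 0 := by positivity
  ext i j
  simp only [sub_apply, add_apply, smul_apply, vecMulVec_apply, smul_eq_mul]
  field_simp
  simp only [Pi.smul_apply, smul_eq_mul]
  ring

/-- First-order bounds for the trace of a power under a rank-one downdate. -/
theorem Matrix.PosSemidef.trace_pow_sub_smul_vecMulVec {G : Matrix ι ι ℝ} (hG : G.PosSemidef)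
    (v : ι → ℝ) {r : ℝ} (hr : 0 ≤ r)
    (hK : (G - r • vecMulVec (G *ᵥ v) (G *ᵥ v)).PosSemidef) (m : ℕ) :
    (G ^ (m + 1)).trace - (m + 1) * r * (v ⬝ᵥ G ^ (m + 2) *ᵥ v) ≤
        ((G - r • vecMulVec (G *ᵥ v) (G *ᵥ v)) ^ (m + 1)).trace ∧
      ((G - r • vecMulVec (G *ᵥ v) (G *ᵥ v)) ^ (m + 1)).trace ≤ (G ^ (m + 1)).trace -
        (m + 1) * r * (v ⬝ᵥ G ^ (m + 2) *ᵥ v) * (1 - (m + 1) * r * (v ⬝ᵥ G *ᵥ v)) := by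
  have symm_of : ∀ {A : Matrix ι ι ℝ}, A.PosSemidef → A.IsSymm := fun {A} hA => by
    simpa [IsHermitian, IsSymm, conjTranspose_eq_transpose_of_trivial] using hA.1
  set w := G *ᵥ v with hw
  set K := G - r • vecMulVec w w with hKdef
  set q := v ⬝ᵥ G *ᵥ v with hqdef
  have hq : 0 ≤ q := by simpa using hG.dotProduct_mulVec_nonneg v
  set c : ℕ → ℕ → ℝ := fun i j => w ⬝ᵥ (G ^ i * K ^ j) *ᵥ w with hc
  have hc0 : ∀ i, c i 0 = v ⬝ᵥ G ^ (i + 2) *ᵥ v := fun i => by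
    simp only [hc, pow_zero, mul_one]
    rw [hw, ← (symm_of hG).dotProduct_mulVec_comm, mulVec_mulVec, mulVec_mulVec, ← pow_succ',
      ← pow_succ]
  have ha : ∀ i, 0 ≤ c i 0 := fun i => by
    rw [hc0]; simpa using (hG.pow (i + 2)).dotProduct_mulVec_nonneg v
  have hb : ∀ j, 0 ≤ c 0 j := fun j => by
    simpa [hc] using (hK.pow j).dotProduct_mulVec_nonneg w
  have hprod : ∀ i j, c i 0 * c j 0 ≤ q * c (i + j + 1) 0 := fun i j => by
    rw [hc0, hc0, hc0]
    have := hG.moment_mul_moment_le v (i + 1) (j + 1)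
    rwa [show i + 1 + (j + 1) + 1 = i + j + 1 + 2 by ring] at this
  have hstep : ∀ i j, G ^ i * K ^ (j + 1) =
      G ^ (i + 1) * K ^ j - r • (G ^ i * vecMulVec w w * K ^ j) := fun i j => by
    rw [pow_succ' K, pow_succ G]
    nth_rewrite 1 [hKdef]
    rw [sub_mul, mul_sub, smul_mul_assoc, mul_smul_comm, mul_assoc, mul_assoc]
  have hrec : ∀ i j, c i (j + 1) = c (i + 1) j - r * (c i 0 * c 0 j) := fun i j => by
    simp only [hc]
    rw [hstep, sub_mulVec, dotProduct_sub, smul_mulVec, dotProduct_smul, smul_eq_mul,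
      pow_zero, pow_zero, one_mul, mul_one, mul_vecMulVec, vecMulVec_mul, vecMulVec_mulVec,
      ← dotProduct_mulVec, op_smul_eq_smul, dotProduct_smul, smul_eq_mul,
      mul_comm (w ⬝ᵥ K ^ j *ᵥ w)]
  have hcle : ∀ j i, c i j ≤ c (i + j) 0 := by
    intro j
    induction j with
    | zero => intro i; simp
    | succ j ih =>
      intro i
      have h1 := ih (i + 1)
      rw [show i + 1 + j = i + (j + 1) by ring] at h1
      have := mul_nonneg hr (mul_nonneg (ha i) (hb j))
      rw [hrec]; linarith
  have hcge : ∀ j i, c (i + j) 0 * (1 - j * r * q) ≤ c i j := by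
    intro j
    induction j with
    | zero => intro i; simp
    | succ j ih =>
      intro i
      have h1 := ih (i + 1)
      rw [show i + 1 + j = i + (j + 1) by ring] at h1
      have h2 : c i 0 * c 0 j ≤ q * c (i + (j + 1)) 0 := by
        refine le_trans (mul_le_mul_of_nonneg_left (hcle j 0) (ha i)) ?_
        simpa [add_assoc] using hprod i j
      have h3 := mul_le_mul_of_nonneg_left h2 hr
      rw [hrec]; push_cast; linarith
  have htr : ∀ i j, (G ^ i * K ^ (j + 1)).trace = (G ^ (i + 1) * K ^ j).trace - r * c i j :=
    fun i j => by
    rw [hstep, trace_sub, trace_smul, smul_eq_mul, mul_vecMulVec, vecMulVec_mul, trace_vecMulVec]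
    congr 2
    rw [dotProduct_comm, ← dotProduct_mulVec]
    simp only [hc]
    rw [← mulVec_mulVec, (symm_of (hG.pow i)).dotProduct_mulVec_comm,
      (symm_of (hK.pow j)).dotProduct_mulVec_comm, dotProduct_comm]
  set a := c m 0 with hadef
  have hmain : ∀ j i, i + j = m + 1 →
      (G ^ (m + 1)).trace - j * r * a ≤ (G ^ i * K ^ j).trace ∧
      (G ^ i * K ^ j).trace ≤ (G ^ (m + 1)).trace - j * r * a * (1 - (m + 1) * r * q) := by
    intro j
    induction j with
    | zero => rintro i rfl; simp
    | succ j ih =>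
      intro i hij
      obtain ⟨h1, h2⟩ := ih (i + 1) (by omega)
      have e : i + j = m := by omega
      have h3 := hcle j i
      have h4 := hcge j i
      rw [e] at h3 h4
      have hj : (j : ℝ) ≤ m + 1 := by exact_mod_cast (by omega : j ≤ m + 1)
      have h5 : a * (1 - (m + 1) * r * q) ≤ c i j := by
        refine le_trans (mul_le_mul_of_nonneg_left ?_ (ha m)) h4
        have := mul_le_mul_of_nonneg_right hj (mul_nonneg hr hq)
        linarith
      have h6 := mul_le_mul_of_nonneg_left h3 hr
      have h7 := mul_le_mul_of_nonneg_left h5 hr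
      rw [htr]; push_cast
      constructor <;> linarith
  have := hmain (m + 1) 0 (by omega)
  rw [hadef, hc0] at this
  simpa using this

/-- Replacing a rank-one update by a Bernoulli one with the same mean, up to the factor `1 - η`,
does not increase the expected trace of powers of the inverse. -/
theorem Matrix.PosDef.bernoulli_trace_inv_pow_le {H : Matrix ι ι ℝ} (hH : H.PosDef)
    (hle : ∀ z : ι → ℝ, z ⬝ᵥ z ≤ z ⬝ᵥ H *ᵥ z) (v : ι → ℝ) {p η : ℝ} (hp : 0 < p) (m : ℕ)
    (hη : η ≤ 1) (hv : (m + 2) * (v ⬝ᵥ v) ≤ η * p) :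
    (1 - p) * (H⁻¹ ^ (m + 1)).trace + p * ((H + p⁻¹ • vecMulVec v v)⁻¹ ^ (m + 1)).trace ≤
      ((H + (1 - η) • vecMulVec v v)⁻¹ ^ (m + 1)).trace := by
  have hs : 0 ≤ 1 - η := sub_nonneg.2 hη
  have hp' : 0 ≤ p⁻¹ := inv_nonneg.2 hp.le
  have hG := hH.inv.posSemidef
  have hq0 : 0 ≤ v ⬝ᵥ H⁻¹ *ᵥ v := by simpa using hG.dotProduct_mulVec_nonneg v
  have hqv : v ⬝ᵥ H⁻¹ *ᵥ v ≤ v ⬝ᵥ v := by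
    simpa using hH.dotProduct_inv_mulVec_le one_pos (by simpa using hle) v
  have ha : 0 ≤ v ⬝ᵥ H⁻¹ ^ (m + 2) *ᵥ v := by
    simpa using (hG.pow (m + 2)).dotProduct_mulVec_nonneg v
  have e1 := hH.inv_add_smul_vecMulVec v hp'
  have e2 := hH.inv_add_smul_vecMulVec v hs
  have k1 := (hH.add_smul_vecMulVec v hp').inv.posSemidef
  have k2 := (hH.add_smul_vecMulVec v hs).inv.posSemidef
  rw [e1] at k1
  rw [e2] at k2
  rw [e1, e2]
  have b1 := (hG.trace_pow_sub_smul_vecMulVec v (by positivity) k1 m).2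
  have b2 := (hG.trace_pow_sub_smul_vecMulVec v (by positivity) k2 m).1
  set q := v ⬝ᵥ H⁻¹ *ᵥ v
  set a := v ⬝ᵥ H⁻¹ ^ (m + 2) *ᵥ v
  have r1 : p⁻¹ / (1 + p⁻¹ * q) = 1 / (p + q) := by field_simp
  have r2 : (1 - η) / (1 + (1 - η) * q) ≤ 1 - η :=
    div_le_self hs (by nlinarith [mul_nonneg hs hq0])
  rw [r1] at b1 ⊢
  have hpq : 0 < p + q := by linarith
  have hqp : (m + 2) * q ≤ η * p := le_trans (by gcongr) hv
  have main : 1 - η ≤ p * (1 / (p + q) * (1 - (m + 1) * (1 / (p + q)) * q)) := by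
    have : p * (1 / (p + q) * (1 - (m + 1) * (1 / (p + q)) * q)) =
        p * (p + q - (m + 1) * q) / (p + q) ^ 2 := by field_simp
    rw [this, le_div_iff₀ (by positivity)]
    have hm : (0 : ℝ) ≤ m := m.cast_nonneg
    have hη0 : 0 ≤ η := by
      by_contra hneg
      nlinarith [mul_pos_of_neg_of_neg (not_le.1 hneg) (neg_lt_zero.2 hp), mul_nonneg hm hq0]
    nlinarith [mul_nonneg hη0 (sq_nonneg q), mul_nonneg hη0 (mul_nonneg hp.le hq0),
      mul_nonneg hp.le hq0, mul_le_mul_of_nonneg_left hqp hp.le,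
      mul_le_mul_of_nonneg_left hqp hq0, mul_nonneg hm (mul_nonneg hq0 hq0), mul_nonneg hq0 hq0]
  have c1 := mul_le_mul_of_nonneg_left b1 hp.le
  have hm1 : 0 ≤ ((m : ℝ) + 1) * a := by positivity
  have c2 := mul_le_mul_of_nonneg_left (r2.trans main) hm1
  nlinarith

end RankOne

section BernoulliSampling

theorem bernWeight_nonneg {n : ℕ} {p : Fin n → ℝ} (hp0 : ∀ i, 0 ≤ p i) (hp1 : ∀ i, p i ≤ 1)
    (e : Fin n → Bool) : 0 ≤ bernWeight p e := by
  refine Finset.prod_nonneg fun i _ => ?_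
  split_ifs
  · exact hp0 i
  · exact sub_nonneg.2 (hp1 i)

theorem sum_bernWeight_mul_succ {n : ℕ} (p : Fin (n + 1) → ℝ) (f : (Fin (n + 1) → Bool) → ℝ) :
    ∑ e, bernWeight p e * f e =
      (1 - p 0) * ∑ e, bernWeight (Fin.tail p) e * f (Fin.cons false e) +
        p 0 * ∑ e, bernWeight (Fin.tail p) e * f (Fin.cons true e) := by
  rw [← (Fin.consEquiv fun _ : Fin (n + 1) => Bool).sum_comp, Fintype.sum_prod_type,
    Fintype.sum_bool, add_comm, Finset.mul_sum, Finset.mul_sum]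
  simp [bernWeight, Fin.prod_univ_succ, Fin.tail, mul_assoc, Fin.consEquiv]

/-- Coordinatewise replacement of independent Bernoulli weights by deterministic ones. -/
theorem sum_bernWeight_mul_le {n : ℕ} {p s : Fin n → ℝ} {φ : (Fin n → ℝ) → ℝ}
    (hp0 : ∀ i, 0 ≤ p i) (hp1 : ∀ i, p i ≤ 1) (hs : ∀ i, 0 ≤ s i)
    (h : ∀ t i, (∀ j, 0 ≤ t j) → (1 - p i) * φ (Function.update t i 0) +
      p i * φ (Function.update t i (p i)⁻¹) ≤ φ (Function.update t i (s i))) :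
    ∑ e, bernWeight p e * φ (fun i => if e i then (p i)⁻¹ else 0) ≤ φ s := by
  induction n with
  | zero =>
    simp only [Finset.univ_unique, Finset.sum_singleton, bernWeight, Finset.univ_eq_empty,
      Finset.prod_empty, one_mul]
    exact le_of_eq (congrArg φ (Subsingleton.elim _ _))
  | succ n ih =>
    have hcons : ∀ x : ℝ, 0 ≤ x → ∑ e, bernWeight (Fin.tail p) e *
        φ (Fin.cons x fun i => if e i then (Fin.tail p i)⁻¹ else 0) ≤
          φ (Fin.cons x (Fin.tail s)) := by
      intro x hx
      refine ih (p := Fin.tail p) (s := Fin.tail s) (φ := fun t => φ (Fin.cons x t))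
        (fun i => hp0 _) (fun i => hp1 _) (fun i => hs _) fun t i ht => ?_
      have := h (Fin.cons x t) i.succ (fun j => by
        refine Fin.cases ?_ (fun j => ?_) j
        · simpa using hx
        · simpa using ht j)
      simp only [← Fin.cons_update] at this
      exact this
    have hval : ∀ (b : Bool) (e : Fin n → Bool),
        (fun i => if (Fin.cons b e : Fin (n + 1) → Bool) i then (p i)⁻¹ else 0) =
        (Fin.cons (if b then (p 0)⁻¹ else 0)
          fun i => if e i then (Fin.tail p i)⁻¹ else 0 : Fin (n + 1) → ℝ) := fun b e => by
      funext i
      refine Fin.cases ?_ (fun j => ?_) i <;> simp [Fin.tail]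
    rw [sum_bernWeight_mul_succ]
    simp only [hval]
    have h0 := hcons 0 le_rfl
    have h1 := hcons (p 0)⁻¹ (inv_nonneg.2 (hp0 0))
    have h2 := h s 0 hs
    have hupd : ∀ x, Function.update s 0 x = Fin.cons x (Fin.tail s) := fun x => by
      conv_lhs => rw [← Fin.cons_self_tail s]
      rw [Fin.update_cons_zero]
    rw [hupd 0, hupd (p 0)⁻¹, Function.update_eq_self] at h2
    refine le_trans (add_le_add (mul_le_mul_of_nonneg_left ?_ (sub_nonneg.2 (hp1 0)))
      (mul_le_mul_of_nonneg_left ?_ (hp0 0))) h2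
    · simpa using h0
    · simpa using h1

theorem sum_bernWeight {n : ℕ} (p : Fin n → ℝ) : ∑ e, bernWeight p e = 1 := by
  induction n with
  | zero => simp [bernWeight]
  | succ n ih =>
    have := sum_bernWeight_mul_succ p fun _ => 1
    simpa [ih] using this

theorem one_sub_add_le_sum_ite_bernWeight {n : ℕ} {p : Fin n → ℝ} (hp0 : ∀ i, 0 ≤ p i)
    (hp1 : ∀ i, p i ≤ 1) {P Q R : (Fin n → Bool) → Prop} (h : ∀ e, P e → Q e → R e) {a b : ℝ}
    (hP : ∑ e, (if P e then 0 else bernWeight p e) ≤ a)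
    (hQ : ∑ e, (if Q e then 0 else bernWeight p e) ≤ b) :
    1 - (a + b) ≤ ∑ e, if R e then bernWeight p e else 0 := by
  have : ∑ e, bernWeight p e ≤ ∑ e, (if P e then 0 else bernWeight p e) +
      ∑ e, (if Q e then 0 else bernWeight p e) + ∑ e, if R e then bernWeight p e else 0 := by
    rw [← Finset.sum_add_distrib, ← Finset.sum_add_distrib]
    refine Finset.sum_le_sum fun e _ => ?_
    have h0 := bernWeight_nonneg hp0 hp1 e
    by_cases h1 : P e <;> by_cases h2 : Q e
    · simp [h1, h2, h e h1 h2]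
    all_goals split_ifs <;> linarith
  rw [sum_bernWeight] at this
  linarith

/-- Markov's inequality for independent Bernoulli sampling. -/
theorem mul_sum_ite_bernWeight_le {n : ℕ} {p : Fin n → ℝ} (hp0 : ∀ i, 0 ≤ p i)
    (hp1 : ∀ i, p i ≤ 1) {P : (Fin n → Bool) → Prop} {f : (Fin n → Bool) → ℝ} {K : ℝ}
    (hf : ∀ e, 0 ≤ f e) (h : ∀ e, ¬ P e → K ≤ f e) :
    K * ∑ e, (if P e then 0 else bernWeight p e) ≤ ∑ e, bernWeight p e * f e := by
  rw [Finset.mul_sum]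
  refine Finset.sum_le_sum fun e _ => ?_
  have h0 := bernWeight_nonneg hp0 hp1 e
  split_ifs with hP
  · simpa using mul_nonneg h0 (hf e)
  · rw [mul_comm]
    exact mul_le_mul_of_nonneg_left (h e hP) h0

end BernoulliSampling

section SampledGram

variable {n d : ℕ}

theorem Function.update_sum_smul {M : Type*} [AddCommGroup M] [Module ℝ M] (g : Fin n → M)
    (t : Fin n → ℝ) (i : Fin n) (x : ℝ) :
    ∑ j, Function.update t i x j • g j = ∑ j, Function.update t i 0 j • g j + x • g i := by
  rw [← Finset.add_sum_erase _ _ (Finset.mem_univ i),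
    ← Finset.add_sum_erase (a := i) _ (fun j => Function.update t i 0 j • g j) (Finset.mem_univ i)]
  have : ∀ j ∈ Finset.univ.erase i, Function.update t i x j • g j =
      Function.update t i 0 j • g j := fun j hj => by
    simp [Function.update_of_ne (Finset.ne_of_mem_erase hj)]
  rw [Finset.sum_congr rfl this]
  simp [add_comm]

/-- The regularized weighted Gram matrix `1 + ∑ tᵢ uᵢ uᵢᵀ`. -/
noncomputable def regGram (U : Matrix (Fin n) (Fin d) ℝ) (t : Fin n → ℝ) :
    Matrix (Fin d) (Fin d) ℝ :=
  1 + ∑ i, t i • vecMulVec (U i) (U i)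

theorem regGram_update (U : Matrix (Fin n) (Fin d) ℝ) (t : Fin n → ℝ) (i : Fin n) (x : ℝ) :
    regGram U (Function.update t i x) =
      regGram U (Function.update t i 0) + x • vecMulVec (U i) (U i) := by
  rw [regGram, Function.update_sum_smul, ← add_assoc, regGram]

theorem dotProduct_regGram_mulVec (U : Matrix (Fin n) (Fin d) ℝ) (t : Fin n → ℝ)
    (z : Fin d → ℝ) :
    z ⬝ᵥ regGram U t *ᵥ z = z ⬝ᵥ z + ∑ i, t i * (U *ᵥ z) i ^ 2 := by
  rw [regGram, add_mulVec, one_mulVec, dotProduct_add, sum_mulVec, dotProduct_sum]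
  congr 1
  refine Finset.sum_congr rfl fun i _ => ?_
  rw [smul_mulVec, vecMulVec_mulVec, dotProduct_smul, op_smul_eq_smul, dotProduct_smul,
    dotProduct_comm z]
  simp [mulVec, sq]

theorem regGram_posDef (U : Matrix (Fin n) (Fin d) ℝ) {t : Fin n → ℝ} (ht : ∀ i, 0 ≤ t i) :
    (regGram U t).PosDef := by
  refine PosDef.one.add_posSemidef (posSemidef_sum _ fun i _ => PosSemidef.smul ?_ (ht i))
  simpa using posSemidef_vecMulVec_self_star (U i)

theorem sum_sq_mulVec {U : Matrix (Fin n) (Fin d) ℝ} (hU : Uᵀ * U = 1) (z : Fin d → ℝ) :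
    ∑ i, (U *ᵥ z) i ^ 2 = z ⬝ᵥ z := by
  have : U *ᵥ z ⬝ᵥ U *ᵥ z = z ⬝ᵥ z := by
    rw [dotProduct_mulVec, ← mulVec_transpose, mulVec_mulVec, hU, one_mulVec]
  rw [← this]
  simp [dotProduct, sq]

/-- Expected trace of the powers of the inverse of the sampled regularized Gram matrix. -/
theorem sum_bernWeight_mul_trace_inv_pow_le {U : Matrix (Fin n) (Fin d) ℝ} (hU : Uᵀ * U = 1)
    {p : Fin n → ℝ} (hp0 : ∀ i, 0 ≤ p i) (hp1 : ∀ i, p i ≤ 1) (hz : ∀ i, p i = 0 → U i = 0)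
    (m : ℕ) (hp : ∀ i, p i < 1 → (m + 2) * (U i ⬝ᵥ U i) ≤ 1 / 4 * p i) :
    ∑ e, bernWeight p e *
        ((regGram U fun i => if e i then (p i)⁻¹ else 0)⁻¹ ^ (m + 1)).trace ≤
      d * (4 / 7) ^ (m + 1) := by
  set s : Fin n → ℝ := fun i => if 0 < p i ∧ p i < 1 then 1 - 1 / 4 else 1 with hs
  have hs0 : ∀ i, 3 / 4 ≤ s i := fun i => by simp only [hs]; split_ifs <;> norm_num
  have hs0' : ∀ i, 0 ≤ s i := fun i => le_trans (by norm_num) (hs0 i)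
  refine (sum_bernWeight_mul_le (s := s) (φ := fun t => ((regGram U t)⁻¹ ^ (m + 1)).trace)
    hp0 hp1 hs0' fun t i ht => ?_).trans ?_
  · by_cases hi : 0 < p i ∧ p i < 1
    · have ht' : ∀ j, 0 ≤ Function.update t i 0 j := fun j => by
        by_cases hj : j = i
        · subst hj; simp
        · simpa [Function.update_of_ne hj] using ht j
      rw [regGram_update U t i (p i)⁻¹, regGram_update U t i (s i),
        show s i = 1 - 1 / 4 from if_pos hi]
      refine (regGram_posDef U ht').bernoulli_trace_inv_pow_le (fun z => ?_) (U i) hi.1 m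
        (by norm_num) (hp i hi.2)
      rw [dotProduct_regGram_mulVec]
      exact le_add_of_nonneg_right
        (Finset.sum_nonneg fun j _ => mul_nonneg (ht' j) (sq_nonneg _))
    · rw [show s i = 1 from if_neg hi]
      rcases (hp0 i).eq_or_lt with h0 | h0
      · rw [regGram_update U t i 1, ← h0]
        simp [hz i h0.symm]
      · have h1 : p i = 1 := le_antisymm (hp1 i) (not_lt.1 fun h => hi ⟨h0, h⟩)
        simp [h1]
  · have hH := regGram_posDef U hs0'
    have := hH.inv.posSemidef.trace_pow_le (g := (7 / 4)⁻¹)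
      (hH.dotProduct_inv_mulVec_le (by norm_num) fun z => ?_) (m + 1)
    · simpa using this
    · rw [dotProduct_regGram_mulVec]
      have : 3 / 4 * (z ⬝ᵥ z) ≤ ∑ i, s i * (U *ᵥ z) i ^ 2 := by
        rw [← sum_sq_mulVec hU, Finset.mul_sum]
        exact Finset.sum_le_sum fun i _ => mul_le_mul_of_nonneg_right (hs0 i) (sq_nonneg _)
      linarith

/-- Lower tail bound for the smallest eigenvalue of the sampled Gram matrix. -/
theorem sum_ite_half_le_sampled_le {U : Matrix (Fin n) (Fin d) ℝ} (hU : Uᵀ * U = 1)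
    {p : Fin n → ℝ} (hp0 : ∀ i, 0 ≤ p i) (hp1 : ∀ i, p i ≤ 1) (hz : ∀ i, p i = 0 → U i = 0)
    (m : ℕ) (hp : ∀ i, p i < 1 → (m + 2) * (U i ⬝ᵥ U i) ≤ 1 / 4 * p i) :
    ∑ e, (if ∀ z : Fin d → ℝ, 1 / 2 * (z ⬝ᵥ z) ≤
        ∑ i, (if e i then (p i)⁻¹ else 0) * (U *ᵥ z) i ^ 2 then 0 else bernWeight p e) ≤
      d * (6 / 7) ^ (m + 1) := by
  have ht : ∀ (e : Fin n → Bool) i, 0 ≤ if e i then (p i)⁻¹ else 0 := fun e i => by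
    split_ifs
    · exact inv_nonneg.2 (hp0 i)
    · exact le_rfl
  have hM := mul_sum_ite_bernWeight_le hp0 hp1 (K := (2 / 3) ^ (m + 1))
    (P := fun e => ∀ z : Fin d → ℝ, 1 / 2 * (z ⬝ᵥ z) ≤
        ∑ i, (if e i then (p i)⁻¹ else 0) * (U *ᵥ z) i ^ 2)
    (f := fun e => ((regGram U fun i => if e i then (p i)⁻¹ else 0)⁻¹ ^ (m + 1)).trace)
    (fun e => (regGram_posDef U (ht e)).inv.posSemidef.trace_pow_nonneg _) (fun e he => by
      push Not at he
      obtain ⟨z, hz⟩ := he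
      have hH := regGram_posDef U (ht e)
      have hq := dotProduct_regGram_mulVec U (fun i => if e i then (p i)⁻¹ else 0) z
      set H := regGram U fun i => if e i then (p i)⁻¹ else 0
      have hu : IsUnit H.det := (Matrix.isUnit_iff_isUnit_det H).1 hH.isUnit
      have hsymm : H.IsSymm := by
        simpa [IsHermitian, IsSymm, conjTranspose_eq_transpose_of_trivial] using hH.1
      have h1 : H⁻¹ *ᵥ (H *ᵥ z) = z := by rw [mulVec_mulVec, nonsing_inv_mul _ hu, one_mulVec]
      have h2 : H *ᵥ (H⁻¹ *ᵥ z) = z := by rw [mulVec_mulVec, mul_nonsing_inv _ hu, one_mulVec]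
      have := hH.inv.posSemidef.inv_pow_le_trace_pow (h := 3 / 2) (by norm_num) (v := H *ᵥ z) ?_
        (m + 1)
      · simpa using this
      · rw [pow_two, ← mulVec_mulVec, h1, ← hsymm.dotProduct_mulVec_comm,
          ← hsymm.dotProduct_mulVec_comm, h2]
        linarith)
  have hE := hM.trans (sum_bernWeight_mul_trace_inv_pow_le hU hp0 hp1 hz m hp)
  have e1 : (6 / 7 : ℝ) ^ (m + 1) * (2 / 3) ^ (m + 1) = (4 / 7) ^ (m + 1) := by
    rw [← mul_pow]; norm_num
  refine le_of_mul_le_mul_left (hE.trans_eq ?_) (show (0 : ℝ) < (2 / 3) ^ (m + 1) by positivity)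
  rw [← e1]; ring

/-- Second moment bound for a centred sum sampled with independent Bernoulli weights. -/
theorem sum_bernWeight_mul_dotProduct_le {x : Fin n → Fin d → ℝ} (hx : ∑ i, x i = 0)
    {p : Fin n → ℝ} (hp0 : ∀ i, 0 ≤ p i) (hp1 : ∀ i, p i ≤ 1) (hz : ∀ i, p i = 0 → x i = 0) :
    ∑ e, bernWeight p e * ((∑ i, (if e i then (p i)⁻¹ else 0) • x i) ⬝ᵥ
        ∑ i, (if e i then (p i)⁻¹ else 0) • x i) ≤ ∑ i, ((p i)⁻¹ - 1) * (x i ⬝ᵥ x i) := by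
  set φ : (Fin n → ℝ) → ℝ := fun t => (∑ i, t i • x i) ⬝ᵥ (∑ i, t i • x i) +
    ∑ i, ((p i)⁻¹ * t i - t i ^ 2) • (x i ⬝ᵥ x i) with hφ
  have hupd : ∀ t i y, φ (Function.update t i y) = φ (Function.update t i 0) +
      y * (2 * ((∑ j, Function.update t i 0 j • x j) ⬝ᵥ x i) + (p i)⁻¹ * (x i ⬝ᵥ x i)) := by
    intro t i y
    have h2 : ∀ y, ∑ j, ((p j)⁻¹ * Function.update t i y j - Function.update t i y j ^ 2) •
        (x j ⬝ᵥ x j) = ∑ j, Function.update (fun j => (p j)⁻¹ * t j - t j ^ 2) i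
          ((p i)⁻¹ * y - y ^ 2) j • (x j ⬝ᵥ x j) := fun y => by
      refine Finset.sum_congr rfl fun j _ => ?_
      by_cases hj : j = i
      · subst hj; simp
      · simp [Function.update_of_ne hj]
    simp only [hφ]
    rw [h2 y, h2 0, Function.update_sum_smul _ t i y,
      Function.update_sum_smul _ _ i ((p i)⁻¹ * y - y ^ 2),
      show (p i)⁻¹ * 0 - 0 ^ 2 = (0 : ℝ) by ring]
    simp only [add_dotProduct, dotProduct_add, smul_dotProduct, dotProduct_smul, smul_eq_mul,
      dotProduct_comm (x i)]
    ring
  have hφe : ∀ e : Fin n → Bool, φ (fun i => if e i then (p i)⁻¹ else 0) =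
      (∑ i, (if e i then (p i)⁻¹ else 0) • x i) ⬝ᵥ
        ∑ i, (if e i then (p i)⁻¹ else 0) • x i := fun e => by
    simp only [hφ, add_eq_left]
    refine Finset.sum_eq_zero fun i _ => ?_
    split_ifs <;> simp [sq]
  have := sum_bernWeight_mul_le (s := 1) (φ := φ) hp0 hp1 (fun i => zero_le_one)
    fun t i _ => by
      rw [hupd t i (p i)⁻¹, hupd t i ((1 : Fin n → ℝ) i)]
      rcases (hp0 i).eq_or_lt with h0 | h0
      · simp [← h0, hz i h0.symm]
      · refine le_of_eq ?_
        simp only [Pi.one_apply]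
        field_simp
        ring
  simp only [hφe] at this
  refine this.trans_eq ?_
  simp [hφ, hx]

end SampledGram

section SingularValues

theorem vnorm_nonneg {m : ℕ} (v : Fin m → ℝ) : 0 ≤ vnorm v := Real.sqrt_nonneg _

theorem vnorm_sq {m : ℕ} (v : Fin m → ℝ) : vnorm v ^ 2 = v ⬝ᵥ v := by
  rw [vnorm, Real.sq_sqrt (Finset.sum_nonneg fun i _ => sq_nonneg _)]
  simp [dotProduct, sq]

theorem vnorm_smul {m : ℕ} (a : ℝ) (v : Fin m → ℝ) : vnorm (a • v) = |a| * vnorm v := by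
  rw [vnorm, vnorm, ← Real.sqrt_sq_eq_abs, ← Real.sqrt_mul (sq_nonneg a), Finset.mul_sum]
  simp [mul_pow]

theorem vnorm_pos {m : ℕ} {v : Fin m → ℝ} (hv : v ≠ 0) : 0 < vnorm v := by
  refine (vnorm_nonneg v).lt_of_ne' fun h => hv ?_
  have := vnorm_sq v
  rw [h] at this
  exact dotProduct_self_eq_zero.1 (by simpa using this.symm)

theorem vnorm_zero {m : ℕ} : vnorm (0 : Fin m → ℝ) = 0 := by simp [vnorm]

theorem vnorm_mulVec_le {n d : ℕ} (A : Matrix (Fin n) (Fin d) ℝ) (z : Fin d → ℝ) :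
    vnorm (A *ᵥ z) ≤ Real.sqrt (∑ i, ∑ j, A i j ^ 2) * vnorm z := by
  have h : 0 ≤ ∑ i, ∑ j, A i j ^ 2 :=
    Finset.sum_nonneg fun i _ => Finset.sum_nonneg fun j _ => sq_nonneg _
  rw [vnorm, vnorm, ← Real.sqrt_mul h, Finset.sum_mul]
  exact Real.sqrt_le_sqrt (Finset.sum_le_sum fun i _ =>
    Finset.sum_mul_sq_le_sq_mul_sq Finset.univ (A i) z)

theorem sigmaMin_mul_vnorm_le {n d : ℕ} (X : Matrix (Fin n) (Fin d) ℝ) (z : Fin d → ℝ) :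
    sigmaMin X * vnorm z ≤ vnorm (X *ᵥ z) := by
  by_cases hz : z = 0
  · simp [hz, vnorm_zero]
  have h0 := vnorm_pos hz
  rw [← le_div_iff₀ h0]
  refine csInf_le ⟨0, ?_⟩ ⟨(vnorm z)⁻¹ • z, ?_, ?_⟩
  · rintro r ⟨v, -, rfl⟩
    exact vnorm_nonneg _
  · rw [vnorm_smul, abs_of_pos (inv_pos.2 h0), inv_mul_cancel₀ h0.ne']
  · rw [mulVec_smul, vnorm_smul, abs_of_pos (inv_pos.2 h0), inv_mul_eq_div]

theorem vnorm_mulVec_le_sigmaMax_mul {n d : ℕ} (X : Matrix (Fin n) (Fin d) ℝ) (z : Fin d → ℝ) :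
    vnorm (X *ᵥ z) ≤ sigmaMax X * vnorm z := by
  by_cases hz : z = 0
  · simp [hz, vnorm_zero]
  have h0 := vnorm_pos hz
  rw [← div_le_iff₀ h0]
  refine le_csSup ⟨Real.sqrt (∑ i, ∑ j, X i j ^ 2), ?_⟩ ⟨(vnorm z)⁻¹ • z, ?_, ?_⟩
  · rintro r ⟨v, hv, rfl⟩
    simpa [hv] using vnorm_mulVec_le X v
  · rw [vnorm_smul, abs_of_pos (inv_pos.2 h0), inv_mul_cancel₀ h0.ne']
  · rw [mulVec_smul, vnorm_smul, abs_of_pos (inv_pos.2 h0), inv_mul_eq_div]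

theorem sigmaMin_pos {n d : ℕ} {X : Matrix (Fin n) (Fin d) ℝ} (hd : 0 < d)
    {L : Matrix (Fin d) (Fin n) ℝ} (hL : L * X = 1) : 0 < sigmaMin X := by
  set F := Real.sqrt (∑ i, ∑ j, L i j ^ 2)
  have hF : ∀ v, vnorm v = 1 → 1 ≤ F * vnorm (X *ᵥ v) := fun v hv => by
    have := vnorm_mulVec_le L (X *ᵥ v)
    rwa [mulVec_mulVec, hL, one_mulVec, hv] at this
  have hunit : vnorm (Pi.single (⟨0, hd⟩ : Fin d) (1 : ℝ)) = 1 := by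
    simp [vnorm, Pi.single_apply]
  have hF0 : 0 < F := by
    have := hF _ hunit
    exact (Real.sqrt_nonneg _).lt_of_ne' fun h => by
      rw [show F = 0 from h, zero_mul] at this
      linarith
  refine lt_of_lt_of_le (inv_pos.2 hF0) (le_csInf ⟨_, _, hunit, rfl⟩ ?_)
  rintro r ⟨v, hv, rfl⟩
  rw [inv_le_iff_one_le_mul₀ hF0, mul_comm]
  exact hF v hv

end SingularValues

section LeastSquares

variable {n d : ℕ}

theorem isUnit_det_transpose_mul_self {X : Matrix (Fin n) (Fin d) ℝ} (hX : X.rank = d) :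
    IsUnit (Xᵀ * X).det := by
  rw [← Matrix.isUnit_iff_isUnit_det, ← mulVec_surjective_iff_isUnit, ← Matrix.coe_mulVecLin,
    ← LinearMap.range_eq_top]
  refine Submodule.eq_top_of_finrank_eq ?_
  rw [← Matrix.rank_transpose_mul_self X, Matrix.rank] at hX
  simpa using hX

theorem mul_transpose_eq_hat {X U : Matrix (Fin n) (Fin d) ℝ} (hX : IsUnit (Xᵀ * X).det)
    (hU : Uᵀ * U = 1) (hrange : LinearMap.range U.mulVecLin = LinearMap.range X.mulVecLin) :
    U * Uᵀ = X * (Xᵀ * X)⁻¹ * Xᵀ := by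
  have factor : ∀ {A B : Matrix (Fin n) (Fin d) ℝ},
      LinearMap.range A.mulVecLin ≤ LinearMap.range B.mulVecLin →
      ∃ C : Matrix (Fin d) (Fin d) ℝ, A = B * C := by
    intro A B hAB
    choose c hc using fun j => hAB ⟨Pi.single j 1, rfl⟩
    refine ⟨of fun i j => c j i, ?_⟩
    ext i j
    have := congrFun (hc j) i
    simp only [mulVecLin_apply, mulVec_single_one] at this
    rw [col_apply] at this
    rw [← this]
    rfl
  obtain ⟨C, hC⟩ := factor hrange.le
  obtain ⟨B, hB⟩ := factor hrange.ge
  set P := X * (Xᵀ * X)⁻¹ * Xᵀ with hP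
  have hPX : P * X = X := by
    rw [hP, Matrix.mul_assoc, Matrix.mul_assoc, nonsing_inv_mul _ hX, Matrix.mul_one]
  have hPU : P * U = U := by rw [hC, ← Matrix.mul_assoc, hPX]
  have hUX : U * Uᵀ * X = X := by
    rw [hB, Matrix.mul_assoc, ← Matrix.mul_assoc Uᵀ, hU, Matrix.one_mul]
  have hUP : U * Uᵀ * P = P := by
    rw [hP, ← Matrix.mul_assoc, ← Matrix.mul_assoc, hUX]
  have hPt : Pᵀ = P := by
    rw [hP]
    simp [transpose_mul, transpose_nonsing_inv, Matrix.mul_assoc]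
  have h1 : P * (U * Uᵀ) = U * Uᵀ := by rw [← Matrix.mul_assoc, hPU]
  have h2 := congrArg transpose hUP
  simp only [transpose_mul, transpose_transpose, hPt] at h2
  rw [← h1, h2]

/-- Deterministic error bound for a weighted least-squares solution in an orthonormal basis. -/
theorem dotProduct_self_le_of_weighted_le {U : Matrix (Fin n) (Fin d) ℝ} {t r : Fin n → ℝ}
    {a : Fin d → ℝ} (hmin : ∑ i, t i * (r i - (U *ᵥ a) i) ^ 2 ≤ ∑ i, t i * r i ^ 2)
    (hlow : 1 / 2 * (a ⬝ᵥ a) ≤ ∑ i, t i * (U *ᵥ a) i ^ 2) :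
    a ⬝ᵥ a ≤ 16 * ((∑ i, t i • r i • U i) ⬝ᵥ ∑ i, t i • r i • U i) := by
  set N := ∑ i, t i • r i • U i with hN
  have h1 : a ⬝ᵥ N = ∑ i, t i * (r i * (U *ᵥ a) i) := by
    rw [hN, dotProduct_sum]
    refine Finset.sum_congr rfl fun i _ => ?_
    rw [dotProduct_smul, dotProduct_smul, dotProduct_comm]
    rfl
  have h2 : ∑ i, t i * (r i - (U *ᵥ a) i) ^ 2 =
      ∑ i, t i * r i ^ 2 - 2 * (a ⬝ᵥ N) + ∑ i, t i * (U *ᵥ a) i ^ 2 := by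
    rw [h1, Finset.mul_sum, ← Finset.sum_sub_distrib, ← Finset.sum_add_distrib]
    exact Finset.sum_congr rfl fun i _ => by ring
  have h3 : 0 ≤ (a - (4 : ℝ) • N) ⬝ᵥ (a - (4 : ℝ) • N) := by
    simpa using dotProduct_star_self_nonneg (a - (4 : ℝ) • N)
  have h4 : (a - (4 : ℝ) • N) ⬝ᵥ (a - (4 : ℝ) • N) = a ⬝ᵥ a - 8 * (a ⬝ᵥ N) + 16 * (N ⬝ᵥ N) := by
    simp only [sub_dotProduct, dotProduct_sub, smul_dotProduct, dotProduct_smul, smul_eq_mul,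
      dotProduct_comm N a]
    ring
  linarith

/-- For `m` of order `log d`, the factor `(6 / 7) ^ (m + 1)` beats the dimension. -/
theorem natCast_mul_six_sevenths_pow_le {d m : ℕ} (hd : 2 ≤ d) (hm : 35 * Real.log d ≤ m) :
    d * (6 / 7 : ℝ) ^ (m + 1) ≤ 1 / 10 := by
  have hd' : (2 : ℝ) ≤ d := by exact_mod_cast hd
  have hd0 : (0 : ℝ) < d := by linarith
  have h1 : (6 / 7 : ℝ) ≤ Real.exp (-(1 / 7)) := by
    have := Real.add_one_le_exp (-(1 / 7 : ℝ)); linarith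
  have h2 : (6 / 7 : ℝ) ^ (m + 1) ≤ Real.exp (-(5 * Real.log d)) := by
    refine (pow_le_pow_left₀ (by norm_num) h1 _).trans ?_
    rw [← Real.exp_nat_mul, Real.exp_le_exp]
    push_cast; linarith
  have h3 : Real.exp (-(5 * Real.log d)) = ((d : ℝ) ^ 5)⁻¹ := by
    rw [Real.exp_neg, show 5 * Real.log d = ((5 : ℕ) : ℝ) * Real.log d by norm_num,
      Real.exp_nat_mul, Real.exp_log hd0]
  have h4 : (2 : ℝ) ^ 4 ≤ (d : ℝ) ^ 4 := pow_le_pow_left₀ (by norm_num) hd' 4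
  calc d * (6 / 7 : ℝ) ^ (m + 1) ≤ d * ((d : ℝ) ^ 5)⁻¹ := by rw [← h3]; gcongr
    _ = ((d : ℝ) ^ 4)⁻¹ := by field_simp
    _ ≤ ((2 : ℝ) ^ 4)⁻¹ := inv_anti₀ (by norm_num) h4
    _ ≤ 1 / 10 := by norm_num

/-- The failure probability of approximate matrix multiplication under leverage-score sampling. -/
theorem sum_ite_sampled_residual_le {U : Matrix (Fin n) (Fin d) ℝ} {r p : Fin n → ℝ}
    (hUr : Uᵀ *ᵥ r = 0) (hp0 : ∀ i, 0 ≤ p i) (hp1 : ∀ i, p i ≤ 1) (hz : ∀ i, p i = 0 → U i = 0)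
    {ε R : ℝ} (hε : 0 < ε) (hR : ∀ i, ((p i)⁻¹ - 1) * (U i ⬝ᵥ U i) ≤ R) (hRε : 160 * R ≤ ε) :
    ∑ e, (if 16 * ((∑ i, (if e i then (p i)⁻¹ else 0) • r i • U i) ⬝ᵥ
        ∑ i, (if e i then (p i)⁻¹ else 0) • r i • U i) ≤ ε * (r ⬝ᵥ r)
      then 0 else bernWeight p e) ≤ 1 / 10 := by
  have hr0 : 0 ≤ r ⬝ᵥ r := by simpa using dotProduct_star_self_nonneg r
  rcases hr0.eq_or_lt with h0 | h0
  · have : r = 0 := dotProduct_self_eq_zero.1 h0.symm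
    simp [this]
  have hx : ∑ i, r i • U i = 0 := by
    rw [← hUr]
    ext j
    simp [mulVec, dotProduct, mul_comm]
  have hm := sum_bernWeight_mul_dotProduct_le hx hp0 hp1 fun i hi => by rw [hz i hi, smul_zero]
  have hle : ∑ i, ((p i)⁻¹ - 1) * ((r i • U i) ⬝ᵥ (r i • U i)) ≤ R * (r ⬝ᵥ r) := by
    rw [dotProduct, Finset.mul_sum]
    refine Finset.sum_le_sum fun i _ => ?_
    have := mul_le_mul_of_nonneg_right (hR i) (mul_self_nonneg (r i))
    simp only [smul_dotProduct, dotProduct_smul, smul_eq_mul]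
    linarith
  have hM := mul_sum_ite_bernWeight_le hp0 hp1 (K := ε * (r ⬝ᵥ r))
    (P := fun e => 16 * ((∑ i, (if e i then (p i)⁻¹ else 0) • r i • U i) ⬝ᵥ
        ∑ i, (if e i then (p i)⁻¹ else 0) • r i • U i) ≤ ε * (r ⬝ᵥ r))
    (f := fun e => 16 * ((∑ i, (if e i then (p i)⁻¹ else 0) • r i • U i) ⬝ᵥ
        ∑ i, (if e i then (p i)⁻¹ else 0) • r i • U i))
    (fun e => mul_nonneg (by norm_num) (by
      simpa using dotProduct_star_self_nonneg (∑ i, (if e i then (p i)⁻¹ else 0) • r i • U i)))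
    (fun e he => (not_le.1 he).le)
  simp only [mul_left_comm _ (16 : ℝ), ← Finset.mul_sum] at hM
  have h1 := mul_le_mul_of_nonneg_right hRε h0.le
  refine le_of_mul_le_mul_left (hM.trans ?_) (mul_pos hε h0)
  linarith

end LeastSquares

/-- Sharpened error bound for leverage-score sampling based least-squares regression:
there is an absolute constant `C₀ > 0` such that whenever `c ≥ C₀(d ln d + d/ε)`,
with probability at least `0.8` over leverage-score sampling with parameter `c`,
every minimizer `β̃` of the sampled objective `β ↦ Σ_{i:δ_i=1} p_i⁻¹ (y_i − x^(i)β)²`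
satisfies `‖y − Xβ̃‖² ≤ (1+ε)‖y − Xβ_lsr‖²` and
`‖β_lsr − β̃‖² ≤ (ε/σ_min²(X))‖y − Xβ_lsr‖²`, and moreover, if `γ ∈ (0,1]` satisfies
`‖UUᵀy‖ ≥ γ‖y‖`, also `‖β_lsr − β̃‖² ≤ ε κ²(X)(γ⁻² − 1)‖β_lsr‖²`. -/
theorem stmt_11 :
    ∃ C₀ : ℝ, 0 < C₀ ∧
      ∀ (n d : ℕ) (X : Matrix (Fin n) (Fin d) ℝ) (y : Fin n → ℝ)
        (U : Matrix (Fin n) (Fin d) ℝ) (ε : ℝ) (c : ℕ),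
        2 ≤ d → d ≤ n → X.rank = d →
        Uᵀ * U = 1 →
        LinearMap.range U.mulVecLin = LinearMap.range X.mulVecLin →
        ε ∈ Set.Ioo (0 : ℝ) 1 →
        C₀ * (d * Real.log d + d / ε) ≤ c →
        ∀ (βlsr : Fin d → ℝ), βlsr = ((Xᵀ * X)⁻¹ * Xᵀ).mulVec y →
        ∀ (l : Fin n → ℝ), l = (fun i => (X * (Xᵀ * X)⁻¹ * Xᵀ) i i) →
        ∀ (prob : Fin n → ℝ), prob = (fun i => min 1 ((c : ℝ) * l i / d)) →
        ∀ (obj : (Fin n → Bool) → (Fin d → ℝ) → ℝ),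
          obj = (fun e β => ∑ i, if e i then (prob i)⁻¹ * (y i - ∑ j, X i j * β j) ^ 2 else 0) →
        (0.8 : ℝ) ≤
          ∑ e : Fin n → Bool,
            if (∀ βt : Fin d → ℝ, (∀ β, obj e βt ≤ obj e β) →
                  vnorm (y - X.mulVec βt) ^ 2 ≤ (1 + ε) * vnorm (y - X.mulVec βlsr) ^ 2 ∧
                  vnorm (βlsr - βt) ^ 2
                    ≤ ε / sigmaMin X ^ 2 * vnorm (y - X.mulVec βlsr) ^ 2 ∧
                  ∀ γ : ℝ, 0 < γ → γ ≤ 1 → γ * vnorm y ≤ vnorm ((U * Uᵀ).mulVec y) →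
                    vnorm (βlsr - βt) ^ 2
                      ≤ ε * (sigmaMax X / sigmaMin X) ^ 2 * (γ⁻¹ ^ 2 - 1) * vnorm βlsr ^ 2)
            then bernWeight prob e else 0 := by
  refine ⟨164, by norm_num, ?_⟩
  rintro n d X y U ε c hd - hX hU hrange ⟨hε0, hε1⟩ hc β hβ l hl prob hprob obj hobj
  have hd' : (2 : ℝ) ≤ d := by exact_mod_cast hd
  have hd0 : (0 : ℝ) < d := by linarith
  have hlog : 1 / 2 ≤ Real.log d := by
    have := Real.log_le_log (by norm_num) hd'
    linarith [Real.log_two_gt_d9]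
  have hdlog : 0 < d * Real.log d := mul_pos hd0 (by linarith)
  have hdε : 0 < d / ε := div_pos hd0 hε0
  have hc0 : (0 : ℝ) < c := by linarith
  have hdet := isUnit_det_transpose_mul_self hX
  have hhat := mul_transpose_eq_hat hdet hU hrange
  have hleft : (Xᵀ * X)⁻¹ * Xᵀ * X = 1 := by rw [Matrix.mul_assoc, nonsing_inv_mul _ hdet]
  have hXβ : X *ᵥ β = (U * Uᵀ) *ᵥ y := by rw [hβ, mulVec_mulVec, hhat, Matrix.mul_assoc]
  set r := y - X *ᵥ β with hr
  have hUr : Uᵀ *ᵥ r = 0 := by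
    rw [hr, hXβ, mulVec_sub, mulVec_mulVec, ← Matrix.mul_assoc, hU, Matrix.one_mul, sub_self]
  have hlU : ∀ i, l i = U i ⬝ᵥ U i := fun i => by
    rw [hl]
    simp only [← hhat]
    rfl
  have hl0 : ∀ i, 0 ≤ l i := fun i => by
    rw [hlU]; simpa using dotProduct_star_self_nonneg (U i)
  have hp0 : ∀ i, 0 ≤ prob i := fun i => by
    rw [hprob]
    exact le_min zero_le_one (div_nonneg (mul_nonneg hc0.le (hl0 i)) hd0.le)
  have hp1 : ∀ i, prob i ≤ 1 := fun i => by rw [hprob]; exact min_le_left _ _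
  have hplt : ∀ i, prob i < 1 → prob i = c * l i / d := fun i hi => by
    rw [hprob] at hi ⊢
    exact min_eq_right (by simpa using (min_lt_iff.1 hi).resolve_left (lt_irrefl _) |>.le)
  have hz : ∀ i, prob i = 0 → U i = 0 := fun i hi => by
    have h1 := hplt i (by rw [hi]; exact zero_lt_one)
    rw [hi, hlU, eq_comm, div_eq_zero_iff] at h1
    rcases h1 with h1 | h1
    · exact dotProduct_self_eq_zero.1 ((mul_eq_zero.1 h1).resolve_left hc0.ne')
    · exact absurd h1 hd0.ne'
  set m := ⌈35 * Real.log d⌉₊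
  have hm1 : 35 * Real.log d ≤ m := Nat.le_ceil _
  have hm2 : (m : ℝ) < 35 * Real.log d + 1 := Nat.ceil_lt_add_one (by linarith)
  have hA := (sum_ite_half_le_sampled_le hU hp0 hp1 hz m fun i hi => by
    rw [hplt i hi, ← hlU]
    have : (m + 2) * (4 * d) ≤ (c : ℝ) := by nlinarith
    have h2 := mul_le_mul_of_nonneg_right this (hl0 i)
    rw [← mul_div_assoc, le_div_iff₀ hd0]
    linarith).trans (natCast_mul_six_sevenths_pow_le hd hm1)
  have hB := sum_ite_sampled_residual_le (ε := ε) (R := d / c) hUr hp0 hp1 hz hε0 (fun i => by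
      rcases (hp1 i).eq_or_lt with h1 | h1
      · rw [h1]; simp; positivity
      · rw [← hlU]
        rcases (hl0 i).eq_or_lt with h2 | h2
        · rw [← h2, mul_zero]; positivity
        · rw [hplt i h1]
          have : ((c * l i / d)⁻¹ - 1) * l i = d / c - l i := by field_simp
          rw [this]; linarith)
    (by
      rw [mul_div_assoc', div_le_iff₀ hc0]
      have : 164 * (d / ε) ≤ c := by linarith
      rw [mul_div_assoc', div_le_iff₀ hε0] at this
      linarith)
  refine le_trans ?_ (one_sub_add_le_sum_ite_bernWeight hp0 hp1 ?_ hA hB)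
  · norm_num
  intro e h1 h2 βt hmin
  set t : Fin n → ℝ := fun i => if e i then (prob i)⁻¹ else 0 with ht
  have hobjt : ∀ β', obj e β' = ∑ i, t i * (y i - (X *ᵥ β') i) ^ 2 := fun β' => by
    rw [hobj]
    refine Finset.sum_congr rfl fun i _ => ?_
    simp only [ht]
    split_ifs
    · rfl
    · rw [zero_mul]
  obtain ⟨a, ha⟩ : ∃ a, U *ᵥ a = X *ᵥ (βt - β) := by
    have : X *ᵥ (βt - β) ∈ LinearMap.range U.mulVecLin := hrange ▸ ⟨_, rfl⟩
    exact this
  have hb : a ⬝ᵥ a ≤ ε * (r ⬝ᵥ r) := by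
    refine (dotProduct_self_le_of_weighted_le ?_ (h1 a)).trans h2
    have := hmin β
    rw [hobjt, hobjt] at this
    refine le_trans (le_of_eq (Finset.sum_congr rfl fun i _ => ?_)) this
    have : r i - (U *ᵥ a) i = y i - (X *ᵥ βt) i := by
      rw [ha, hr, mulVec_sub]
      simp
    rw [this]
  have hnorm : vnorm (X *ᵥ (βt - β)) ^ 2 ≤ ε * vnorm r ^ 2 := by
    rw [vnorm_sq, vnorm_sq, ← ha, dotProduct_mulVec, ← mulVec_transpose, mulVec_mulVec, hU,
      one_mulVec]
    exact hb
  have horth : ∀ z, (U *ᵥ z) ⬝ᵥ r = 0 := fun z => by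
    rw [dotProduct_comm, dotProduct_mulVec, ← mulVec_transpose, hUr, zero_dotProduct]
  have hσ := sigmaMin_pos (by omega) hleft
  have hdiff : vnorm (β - βt) ^ 2 ≤ ε / sigmaMin X ^ 2 * vnorm r ^ 2 := by
    rw [div_mul_eq_mul_div, le_div_iff₀ (by positivity)]
    refine le_trans ?_ hnorm
    have h3 := sigmaMin_mul_vnorm_le X (βt - β)
    have h4 : vnorm (β - βt) = vnorm (βt - β) := by
      rw [← neg_sub, ← neg_one_smul ℝ, vnorm_smul]; simp
    rw [h4, ← mul_pow, mul_comm]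
    exact pow_le_pow_left₀ (mul_nonneg hσ.le (vnorm_nonneg _)) h3 2
  refine ⟨?_, hdiff, fun γ hγ0 hγ1 hγ => ?_⟩
  · have h3 : y - X *ᵥ βt = r - U *ᵥ a := by rw [ha, hr, mulVec_sub]; abel
    have h4 : vnorm (y - X *ᵥ βt) ^ 2 = vnorm r ^ 2 + vnorm (X *ᵥ (βt - β)) ^ 2 := by
      rw [h3, vnorm_sq, vnorm_sq, vnorm_sq, ← ha]
      simp only [sub_dotProduct, dotProduct_sub, dotProduct_comm r, horth]
      ring
    rw [h4]; linarith
  · rw [← hXβ] at hγ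
    have hy : vnorm y ^ 2 = vnorm (X *ᵥ β) ^ 2 + vnorm r ^ 2 := by
      have h3 : y = U *ᵥ (Uᵀ *ᵥ y) + r := by rw [mulVec_mulVec, ← hXβ, hr]; abel
      have h4 : X *ᵥ β = U *ᵥ (Uᵀ *ᵥ y) := by rw [mulVec_mulVec, hXβ]
      rw [vnorm_sq, vnorm_sq, vnorm_sq, h4]
      conv_lhs => rw [h3]
      simp only [add_dotProduct, dotProduct_add, dotProduct_comm r, horth]
      ring
    have h5 : vnorm y ^ 2 ≤ γ⁻¹ ^ 2 * vnorm (X *ᵥ β) ^ 2 := by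
      have h6 : vnorm y ≤ γ⁻¹ * vnorm (X *ᵥ β) := by
        rw [inv_mul_eq_div, le_div_iff₀ hγ0, mul_comm]; exact hγ
      rw [← mul_pow]
      exact pow_le_pow_left₀ (vnorm_nonneg _) h6 2
    have h7 : vnorm (X *ᵥ β) ^ 2 ≤ sigmaMax X ^ 2 * vnorm β ^ 2 := by
      rw [← mul_pow]
      exact pow_le_pow_left₀ (vnorm_nonneg _) (vnorm_mulVec_le_sigmaMax_mul X β) 2
    have hγ' : 0 ≤ γ⁻¹ ^ 2 - 1 := sub_nonneg.2 (one_le_pow₀ ((one_le_inv₀ hγ0).2 hγ1))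
    have h8 : vnorm r ^ 2 ≤ (γ⁻¹ ^ 2 - 1) * (sigmaMax X ^ 2 * vnorm β ^ 2) := by
      have := mul_le_mul_of_nonneg_left h7 hγ'
      linarith
    calc vnorm (β - βt) ^ 2 ≤ ε / sigmaMin X ^ 2 * vnorm r ^ 2 := hdiff
      _ ≤ ε / sigmaMin X ^ 2 * ((γ⁻¹ ^ 2 - 1) * (sigmaMax X ^ 2 * vnorm β ^ 2)) := by gcongr
      _ = _ := by rw [div_pow]; ring
end

section
/- Let X ∈ ℝ^{n×d} (n ≥ d, rank(X) = d) with coherence μ, let y ∈ ℝ^n, β_lsr = (XᵀX)⁻¹Xᵀy, and let U ∈ ℝ^{n×d} have orthonormal columns spanning col(X). Let θ₁ ∈ (0, 1), θ₂ > 1, and δ₁, δ₂, δ₃ ∈ (0, 1). Suppose c ≤ n satisfies both c·(θ₁ ln θ₁ − θ₁ + 1) ≥ μ·d·ln(d/δ₁) and c·(θ₂ ln θ₂ − θ₂ + 1) ≥ μ·d·ln(d/δ₂). Let C be a uniformly distributed random c-element subset of {1, …, n}. Then with probability at least 1 − δ₁ − δ₂ − δ₃, every minimizer β̃ of β ↦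 Σ_{i∈C}(y_i − x^(i)β)² satisfies ‖UᵀX(β_lsr − β̃)‖₂ ≤ (1/θ₁)·√(θ₂/δ₃)·‖(I_n − UUᵀ)y‖₂. -/
open Matrix BigOperators
open scoped Classical

section LieProduct

open Filter Topology
open NormedSpace (exp exp_eq_tsum expSeries_summable')

variable {𝔸 : Type*} [NormedRing 𝔸] [NormOneClass 𝔸]

theorem norm_pow_sub_pow_le {X Y : 𝔸} {K : ℝ} (hK : 1 ≤ K) (hX : ‖X‖ ≤ K) (hY : ‖Y‖ ≤ K)
    (m : ℕ) : ‖X ^ m - Y ^ m‖ ≤ m * K ^ m * ‖X - Y‖ := by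
  induction m with
  | zero => simp
  | succ m ih =>
    have hK0 : 0 ≤ K := by linarith
    have h1 : X ^ (m + 1) - Y ^ (m + 1) = X ^ m * (X - Y) + (X ^ m - Y ^ m) * Y := by
      simp only [pow_succ]; noncomm_ring
    have h2 : ‖X ^ m‖ ≤ K ^ m := (norm_pow_le X m).trans (pow_le_pow_left₀ (norm_nonneg _) hX m)
    have h3 : K ^ m ≤ K ^ (m + 1) := pow_le_pow_right₀ hK (Nat.le_succ m)
    calc ‖X ^ (m + 1) - Y ^ (m + 1)‖
        ≤ ‖X ^ m‖ * ‖X - Y‖ + ‖X ^ m - Y ^ m‖ * ‖Y‖ := by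
          rw [h1]
          exact (norm_add_le _ _).trans (add_le_add (norm_mul_le _ _) (norm_mul_le _ _))
      _ ≤ K ^ (m + 1) * ‖X - Y‖ + (m * K ^ m * ‖X - Y‖) * K := by
          gcongr
          exact h2.trans h3
      _ = ((m + 1 : ℕ) : ℝ) * K ^ (m + 1) * ‖X - Y‖ := by push_cast; ring

variable [NormedAlgebra ℝ 𝔸]

theorem norm_exp_le_real_exp (a : 𝔸) : ‖exp a‖ ≤ Real.exp ‖a‖ := by
  let _ : NormedAlgebra ℚ 𝔸 := NormedAlgebra.restrictScalars ℚ ℝ 𝔸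
  rw [exp_eq_tsum ℝ, Real.exp_eq_exp_ℝ, exp_eq_tsum ℝ]
  have hs : Summable fun k : ℕ => ((k.factorial : ℝ)⁻¹) • ‖a‖ ^ k := expSeries_summable' (𝕂 := ℝ) ‖a‖
  refine tsum_of_norm_bounded hs.hasSum fun k => ?_
  rw [norm_smul]
  simp only [norm_inv, smul_eq_mul, RCLike.norm_natCast]
  gcongr
  exact norm_pow_le a k

theorem tendsto_exp_mul_exp_pow [CompleteSpace 𝔸] (A B : 𝔸) :
    Tendsto (fun N : ℕ => (exp ((N : ℝ)⁻¹ • A) * exp ((N : ℝ)⁻¹ • B)) ^ N) atTop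
      (𝓝 (exp (A + B))) := by
  let _ : NormedAlgebra ℚ 𝔸 := NormedAlgebra.restrictScalars ℚ ℝ 𝔸
  have hd : HasDerivAt (fun t : ℝ => exp (t • A) * exp (t • B) - exp (t • (A + B))) 0 0 := by
    have := ((hasDerivAt_exp_smul_const A (0 : ℝ)).mul
      (hasDerivAt_exp_smul_const B (0 : ℝ))).sub (hasDerivAt_exp_smul_const (A + B) (0 : ℝ))
    convert! this using 1
    simp
  have hl : Tendsto (fun N : ℕ => (N : ℝ) *
      ‖exp ((N : ℝ)⁻¹ • A) * exp ((N : ℝ)⁻¹ • B) - exp ((N : ℝ)⁻¹ • (A + B))‖) atTop (𝓝 0) := by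
    have h0 := (hasDerivAt_iff_tendsto.1 hd).comp (tendsto_inv_atTop_nhds_zero_nat (𝕜 := ℝ))
    refine h0.congr fun N => ?_
    simp
  set L : ℝ := ‖A‖ + ‖B‖ with hL
  have hbound : ∀ N : ℕ, ‖(exp ((N : ℝ)⁻¹ • A) * exp ((N : ℝ)⁻¹ • B)) ^ N - exp (A + B)‖ ≤
      Real.exp L * ((N : ℝ) *
      ‖exp ((N : ℝ)⁻¹ • A) * exp ((N : ℝ)⁻¹ • B) - exp ((N : ℝ)⁻¹ • (A + B))‖) ∨ N = 0 := by
    intro N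
    rcases Nat.eq_zero_or_pos N with h | hN
    · exact Or.inr h
    left
    have hN' : (0 : ℝ) < N := by exact_mod_cast hN
    have hn : ∀ Z : 𝔸, ‖(N : ℝ)⁻¹ • Z‖ = (N : ℝ)⁻¹ * ‖Z‖ := fun Z => by
      rw [norm_smul, Real.norm_of_nonneg (by positivity)]
    have hX : ‖exp ((N : ℝ)⁻¹ • A) * exp ((N : ℝ)⁻¹ • B)‖ ≤ Real.exp ((N : ℝ)⁻¹ * L) := by
      refine (norm_mul_le _ _).trans ?_
      rw [hL, mul_add, Real.exp_add, ← hn, ← hn]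
      gcongr <;> exact norm_exp_le_real_exp _
    have hY : ‖exp ((N : ℝ)⁻¹ • (A + B))‖ ≤ Real.exp ((N : ℝ)⁻¹ * L) := by
      refine (norm_exp_le_real_exp _).trans ?_
      rw [hn]
      gcongr
      exact norm_add_le A B
    have hpow : exp ((N : ℝ)⁻¹ • (A + B)) ^ N = exp (A + B) := by
      rw [← NormedSpace.exp_nsmul, ← Nat.cast_smul_eq_nsmul ℝ, smul_smul, mul_inv_cancel₀ hN'.ne', one_smul]
    have hKpow : Real.exp ((N : ℝ)⁻¹ * L) ^ N = Real.exp L := by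
      rw [← Real.exp_nat_mul, ← mul_assoc, mul_inv_cancel₀ hN'.ne', one_mul]
    have := norm_pow_sub_pow_le (Real.one_le_exp (by positivity)) hX hY N
    rw [hpow, hKpow] at this
    linarith
  rw [tendsto_iff_norm_sub_tendsto_zero]
  refine squeeze_zero' (Eventually.of_forall fun _ => norm_nonneg _) ?_
    (by simpa only [mul_zero] using hl.const_mul (Real.exp L))
  filter_upwards [eventually_gt_atTop 0] with N hN
  exact (hbound N).resolve_right hN.ne'

end LieProduct

section TraceInequalities

variable {m : Type*} [Fintype m]

theorem trace_mul_transpose_self_nonneg (A : Matrix m m ℝ) : 0 ≤ trace (A * Aᵀ) := by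
  simp only [trace, diag_apply, mul_apply, transpose_apply]
  exact Finset.sum_nonneg fun i _ => Finset.sum_nonneg fun j _ => mul_self_nonneg _

theorem two_mul_trace_mul_le (A B : Matrix m m ℝ) :
    2 * trace (A * B) ≤ trace (A * Aᵀ) + trace (Bᵀ * B) := by
  have h := trace_mul_transpose_self_nonneg (A - Bᵀ)
  have h1 : trace (Bᵀ * Aᵀ) = trace (A * B) := by
    rw [← transpose_mul, trace_transpose]
  simp only [transpose_sub, transpose_transpose, sub_mul, mul_sub, trace_sub, h1] at h
  linarith

theorem trace_mul_pow_comm [DecidableEq m] (A B : Matrix m m ℝ) (k : ℕ) :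
    trace ((A * B) ^ k) = trace ((B * A) ^ k) := by
  cases k with
  | zero => simp
  | succ k =>
    rw [pow_succ, ← mul_assoc, mul_pow_mul, trace_mul_comm, ← mul_assoc, ← pow_succ']

variable [DecidableEq m]

theorem trace_pow_two_pow_le (k : ℕ) :
    (∀ M : Matrix m m ℝ, trace (M ^ 2 ^ (k + 1)) ≤ trace ((M * Mᵀ) ^ 2 ^ k)) ∧
    ∀ P Q : Matrix m m ℝ, P.IsSymm → Q.IsSymm →
      trace ((P * Q) ^ 2 ^ k) ≤ trace (P ^ 2 ^ k * Q ^ 2 ^ k) := by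
  induction k with
  | zero =>
    refine ⟨fun M => ?_, fun P Q _ _ => by simp⟩
    have := two_mul_trace_mul_le M M
    rw [trace_mul_comm Mᵀ M] at this
    simp only [zero_add, pow_one, pow_zero, pow_two]
    linarith
  | succ k ih =>
    obtain ⟨hL, hG⟩ := ih
    refine ⟨fun M => ?_, fun P Q hP hQ => ?_⟩
    · have hs1 : (M * Mᵀ).IsSymm := by simp [IsSymm, transpose_mul]
      have hs2 : (Mᵀ * M).IsSymm := by simp [IsSymm, transpose_mul]
      have h1 : trace ((M * M * (M * M)ᵀ) ^ 2 ^ k) = trace ((M * Mᵀ * (Mᵀ * M)) ^ 2 ^ k) := by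
        rw [transpose_mul, mul_assoc M M, trace_mul_pow_comm]
        simp only [mul_assoc]
      have h2 := two_mul_trace_mul_le ((M * Mᵀ) ^ 2 ^ k) ((Mᵀ * M) ^ 2 ^ k)
      rw [(hs1.pow _).eq, (hs2.pow _).eq, ← pow_add, ← pow_add, ← two_mul, ← pow_succ',
        trace_mul_pow_comm Mᵀ M] at h2
      have h3 := hL (M * M)
      rw [← pow_two, ← pow_mul, ← pow_succ'] at h3
      have h4 := hG _ _ hs1 hs2
      rw [← pow_two] at h1
      linarith
    · have h1 := hL (P * Q)
      have h2 : trace ((P * Q * (P * Q)ᵀ) ^ 2 ^ k) = trace ((P ^ 2 * Q ^ 2) ^ 2 ^ k) := by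
        rw [transpose_mul, hP.eq, hQ.eq, ← mul_assoc, trace_mul_pow_comm, pow_two, pow_two]
        simp only [mul_assoc]
      have h3 := hG _ _ (hP.pow 2) (hQ.pow 2)
      rw [← pow_mul, ← pow_mul, ← pow_succ'] at h3
      linarith

open Filter Topology
open NormedSpace (exp)

theorem trace_exp_add_le {A B : Matrix m m ℝ} (hA : A.IsSymm) (hB : B.IsSymm) :
    trace (exp (A + B)) ≤ trace (exp A * exp B) := by
  rcases isEmpty_or_nonempty m with _ | _
  · simp [trace]
  let _ : NormedRing (Matrix m m ℝ) := Matrix.linftyOpNormedRing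
  let _ : NormedAlgebra ℝ (Matrix m m ℝ) := Matrix.linftyOpNormedAlgebra
  have : NormOneClass (Matrix m m ℝ) := Matrix.linfty_opNormOneClass
  have hlim := (tendsto_exp_mul_exp_pow A B).comp (tendsto_pow_atTop_atTop_of_one_lt one_lt_two)
  have hlim' := ((continuous_id.matrix_trace).tendsto (exp (A + B))).comp hlim
  refine le_of_tendsto hlim' (Eventually.of_forall fun k => ?_)
  have hsm : ∀ Z : Matrix m m ℝ,
      exp ((((2 ^ k : ℕ) : ℝ))⁻¹ • Z) ^ 2 ^ k = exp Z := fun Z => by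
    rw [← Matrix.exp_nsmul, ← Nat.cast_smul_eq_nsmul ℝ, smul_smul,
      mul_inv_cancel₀ (by positivity), one_smul]
  have h := (trace_pow_two_pow_le k).2 _ _ (hA.smul (((2 ^ k : ℕ) : ℝ))⁻¹).exp
    (hB.smul (((2 ^ k : ℕ) : ℝ))⁻¹).exp
  rw [hsm, hsm] at h
  exact h

theorem exp_half_mul_self (A : Matrix m m ℝ) :
    exp ((1 / 2 : ℝ) • A) * exp ((1 / 2 : ℝ) • A) = exp A := by
  rw [← Matrix.exp_add_of_commute _ _ (Commute.refl _), ← add_smul]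
  norm_num

theorem two_mul_trace_exp_half_add_le {A B : Matrix m m ℝ} (hA : A.IsSymm) (hB : B.IsSymm) :
    2 * trace (exp ((1 / 2 : ℝ) • (A + B))) ≤ trace (exp A) + trace (exp B) := by
  have h1 := trace_exp_add_le (hA.smul (1 / 2 : ℝ)) (hB.smul (1 / 2 : ℝ))
  have h2 := two_mul_trace_mul_le (exp ((1 / 2 : ℝ) • A)) (exp ((1 / 2 : ℝ) • B))
  rw [(hA.smul (1 / 2 : ℝ)).exp.eq, (hB.smul (1 / 2 : ℝ)).exp.eq, exp_half_mul_self,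
    exp_half_mul_self] at h2
  rw [smul_add]
  linarith

theorem dotProduct_exp_mulVec_nonneg {A : Matrix m m ℝ} (hA : A.IsSymm) (u : m → ℝ) :
    0 ≤ u ⬝ᵥ (exp A *ᵥ u) := by
  rw [← exp_half_mul_self, ← mulVec_mulVec, dotProduct_mulVec, ← mulVec_transpose,
    (hA.smul (1 / 2 : ℝ)).exp.eq]
  exact Finset.sum_nonneg fun i _ => mul_self_nonneg _

omit [DecidableEq m] in
theorem trace_mul_vecMulVec_self (A : Matrix m m ℝ) (u : m → ℝ) :
    trace (A * vecMulVec u u) = u ⬝ᵥ (A *ᵥ u) := by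
  rw [mul_vecMulVec, trace_vecMulVec, dotProduct_comm]

theorem exp_smul_isIdempotentElem {P : Matrix m m ℝ} (hP : P * P = P) (t : ℝ) :
    exp (t • P) = 1 + (Real.exp t - 1) • P := by
  let _ : NormedRing (Matrix m m ℝ) := Matrix.linftyOpNormedRing
  let _ : NormedAlgebra ℝ (Matrix m m ℝ) := Matrix.linftyOpNormedAlgebra
  have h1 := NormedSpace.exp_series_hasSum_exp' (𝕂 := ℝ) (t • P)
  have h2 := (NormedSpace.exp_series_hasSum_exp' (𝕂 := ℝ) t)
  rw [← Real.exp_eq_exp_ℝ] at h2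
  have hp : ∀ k : ℕ, P ^ (k + 1) = P := fun k => by
    induction k with
    | zero => simp
    | succ k ih => rw [pow_succ, ih, hP]
  refine h1.unique ?_
  rw [← hasSum_nat_add_iff' 1] at h2 ⊢
  simp only [Finset.range_one, Finset.sum_singleton, pow_zero, Nat.factorial_zero, Nat.cast_one,
    inv_one, one_smul, add_sub_cancel_left] at h2 ⊢
  convert! h2.smul_const P using 2 with k
  rw [smul_pow, hp, smul_smul, smul_eq_mul]

/-- Peierls-type bound of a quadratic form by the trace exponential. -/
theorem exp_dotProduct_mulVec_le_trace_exp {H : Matrix m m ℝ} (hH : H.IsSymm) {v : m → ℝ}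
    (hv : v ⬝ᵥ v = 1) : Real.exp (v ⬝ᵥ (H *ᵥ v)) ≤ trace (exp H) := by
  have hA : H.IsHermitian := by rw [IsHermitian, conjTranspose_eq_transpose_of_trivial, hH.eq]
  set Q : Matrix m m ℝ := hA.eigenvectorUnitary.1
  set l := hA.eigenvalues
  have hQ1 : Q * Qᵀ = 1 := by
    have := Unitary.mul_star_self_of_mem hA.eigenvectorUnitary.2
    rwa [star_eq_conjTranspose, conjTranspose_eq_transpose_of_trivial] at this
  have hinv : Q⁻¹ = Qᵀ := inv_eq_right_inv hQ1
  have hspec : H = Q * diagonal l * Qᵀ := by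
    have := hA.spectral_theorem
    rw [Unitary.conjStarAlgAut_apply, star_eq_conjTranspose,
      conjTranspose_eq_transpose_of_trivial] at this
    exact this
  have htr : trace (exp H) = ∑ j, Real.exp (l j) := by
    have hu : IsUnit Q := IsUnit.of_mul_eq_one _ hQ1
    rw [hspec, ← hinv, Matrix.exp_conj _ _ hu, hinv, trace_mul_comm, ← mul_assoc,
      mul_eq_one_comm.1 hQ1, one_mul, Matrix.exp_diagonal, trace_diagonal]
    simp only [Pi.coe_exp, Real.exp_eq_exp_ℝ]
  set w := Qᵀ *ᵥ v with hw
  have hw1 : ∑ j, w j ^ 2 = 1 := by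
    have : w ⬝ᵥ w = 1 := by
      rw [hw, dotProduct_mulVec, vecMul_transpose, mulVec_mulVec, hQ1, one_mulVec, hv]
    rw [← this]
    exact Finset.sum_congr rfl fun j _ => pow_two _
  have hq : v ⬝ᵥ (H *ᵥ v) = ∑ j, w j ^ 2 * l j := by
    rw [hspec, ← mulVec_mulVec, ← mulVec_mulVec, dotProduct_mulVec, ← mulVec_transpose, ← hw,
      dotProduct]
    refine Finset.sum_congr rfl fun j _ => ?_
    rw [mulVec_diagonal]
    ring
  rw [htr, hq]
  calc Real.exp (∑ j, w j ^ 2 * l j) ≤ ∑ j, w j ^ 2 * Real.exp (l j) := by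
        simpa using convexOn_exp.map_sum_le (t := Finset.univ) (w := fun j => w j ^ 2) (p := l)
          (fun j _ => sq_nonneg _) hw1 (fun j _ => Set.mem_univ _)
    _ ≤ ∑ j, Real.exp (l j) := by
        refine Finset.sum_le_sum fun j _ => mul_le_of_le_one_left (Real.exp_pos _).le ?_
        rw [← hw1]
        exact Finset.single_le_sum (f := fun j => w j ^ 2) (fun j _ => sq_nonneg _)
          (Finset.mem_univ j)

end TraceInequalities

section SamplingWithoutReplacement

open NormedSpace (exp)

variable {ι m : Type*} [Fintype ι] [DecidableEq ι] [Fintype m] [DecidableEq m]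

theorem sum_powersetCard_sum_compl (c : ℕ) (h : Finset ι → ι → ℝ) :
    ∑ S ∈ (Finset.univ : Finset ι).powersetCard c, ∑ i ∈ Sᶜ, h S i =
      ∑ T ∈ (Finset.univ : Finset ι).powersetCard (c + 1), ∑ i ∈ T, h (T.erase i) i := by
  rw [Finset.sum_sigma', Finset.sum_sigma']
  refine Finset.sum_bij' (fun p _ => ⟨insert p.2 p.1, p.2⟩) (fun p _ => ⟨p.1.erase p.2, p.2⟩)
    ?_ ?_ ?_ ?_ ?_
  · rintro ⟨S, i⟩ hp
    simp only [Finset.mem_sigma, Finset.mem_powersetCard_univ, Finset.mem_compl] at hp ⊢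
    exact ⟨by rw [Finset.card_insert_of_notMem hp.2, hp.1], Finset.mem_insert_self _ _⟩
  · rintro ⟨T, i⟩ hp
    simp only [Finset.mem_sigma, Finset.mem_powersetCard_univ, Finset.mem_compl] at hp ⊢
    exact ⟨by rw [Finset.card_erase_of_mem hp.2, hp.1]; rfl, Finset.notMem_erase _ _⟩
  · rintro ⟨S, i⟩ hp
    simp only [Finset.mem_sigma, Finset.mem_compl] at hp
    simp [Finset.erase_insert hp.2]
  · rintro ⟨T, i⟩ hp
    simp only [Finset.mem_sigma] at hp
    simp [Finset.insert_erase hp.2]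
  · rintro ⟨S, i⟩ hp
    simp only [Finset.mem_sigma, Finset.mem_compl] at hp
    simp [Finset.erase_insert hp.2]

omit [Fintype ι] [DecidableEq ι] [Fintype m] [DecidableEq m] in
theorem isSymm_sum {f : ι → Matrix m m ℝ} (hf : ∀ i, (f i).IsSymm) (S : Finset ι) :
    (∑ i ∈ S, f i).IsSymm := by
  rw [IsSymm, transpose_sum]
  exact Finset.sum_congr rfl fun i _ => (hf i).eq

omit [Fintype ι] in
theorem card_mul_trace_exp_sum_le_sum_swap {f : ι → Matrix m m ℝ} (hf : ∀ i, (f i).IsSymm)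
    {c : ℕ} {T : Finset ι} (hT : T.card = c + 1) :
    (c * (c + 1) : ℝ) * trace (exp (∑ k ∈ T, f k)) ≤
      ∑ j ∈ T, ∑ i ∈ T.erase j, trace (exp ((∑ k ∈ T.erase j, f k) + f i)) := by
  set A := ∑ k ∈ T, f k with hA
  have hAs : A.IsSymm := isSymm_sum hf T
  set g : ι → ι → ℝ := fun j i => trace (exp (A - f j + f i)) with hg
  have hswap : ∀ i j, 2 * trace (exp A) ≤ g j i + g i j := by
    intro i j
    have h := two_mul_trace_exp_half_add_le ((hAs.sub (hf j)).add (hf i))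
      ((hAs.sub (hf i)).add (hf j))
    have h1 : (1 / 2 : ℝ) • (A - f j + f i + (A - f i + f j)) = A := by
      rw [show A - f j + f i + (A - f i + f j) = (2 : ℝ) • A by rw [two_smul]; abel, smul_smul]
      norm_num
    rwa [h1] at h
  have htot : ((c : ℝ) + 1) * (c + 1) * trace (exp A) ≤ ∑ j ∈ T, ∑ i ∈ T, g j i := by
    have h1 : ∑ j ∈ T, ∑ i ∈ T, 2 * trace (exp A) ≤ ∑ j ∈ T, ∑ i ∈ T, (g j i + g i j) :=
      Finset.sum_le_sum fun j _ => Finset.sum_le_sum fun i _ => hswap i j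
    simp only [Finset.sum_add_distrib] at h1
    rw [Finset.sum_comm (f := fun j i => g i j)] at h1
    simp only [Finset.sum_const, hT, nsmul_eq_mul, Nat.cast_add, Nat.cast_one] at h1
    linarith
  have hsplit : ∀ j ∈ T, ∑ i ∈ T, g j i =
      ∑ i ∈ T.erase j, trace (exp ((∑ k ∈ T.erase j, f k) + f i)) + trace (exp A) := by
    intro j hj
    rw [← Finset.sum_erase_add _ _ hj]
    congr 1
    · refine Finset.sum_congr rfl fun i _ => ?_
      simp only [hg, hA, Finset.sum_erase_eq_sub hj]
    · simp [hg]
  rw [Finset.sum_congr rfl hsplit, Finset.sum_add_distrib] at htot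
  simp only [Finset.sum_const, hT, nsmul_eq_mul, Nat.cast_add, Nat.cast_one] at htot
  linarith

/-- Trace moment generating function bound for uniform sampling without replacement. -/
theorem sum_trace_exp_le_choose_mul {f : ι → Matrix m m ℝ} (hf : ∀ i, (f i).IsSymm)
    {κ : ℝ} (hκ : 0 ≤ κ)
    (hstep : ∀ A : Matrix m m ℝ, A.IsSymm →
      ∑ i, trace (exp (A + f i)) ≤ Fintype.card ι * κ * trace (exp A))
    {c : ℕ} (hc : c ≤ Fintype.card ι) :
    ∑ S ∈ (Finset.univ : Finset ι).powersetCard c, trace (exp (∑ i ∈ S, f i)) ≤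
      (Fintype.card ι).choose c * κ ^ c * Fintype.card m := by
  induction c with
  | zero => simp
  | succ c ih =>
    specialize ih (by omega)
    set n := Fintype.card ι with hn
    set Z : ℕ → ℝ := fun c => ∑ S ∈ (Finset.univ : Finset ι).powersetCard c,
      trace (exp (∑ i ∈ S, f i)) with hZ
    set B : ℝ := ∑ S ∈ (Finset.univ : Finset ι).powersetCard c,
      ∑ i ∈ S, trace (exp ((∑ k ∈ S, f k) + f i)) with hB
    have hnew : ∑ S ∈ (Finset.univ : Finset ι).powersetCard c,
        ∑ i ∈ Sᶜ, trace (exp ((∑ k ∈ S, f k) + f i)) = (c + 1) * Z (c + 1) := by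
      rw [sum_powersetCard_sum_compl c fun S i => trace (exp ((∑ k ∈ S, f k) + f i)), hZ,
        Finset.mul_sum]
      refine Finset.sum_congr rfl fun T hT => ?_
      rw [Finset.sum_congr rfl fun i hi => by rw [Finset.sum_erase_add _ _ hi]]
      simp [Finset.mem_powersetCard_univ.1 hT]
    have hle : (c + 1) * Z (c + 1) + B ≤ n * κ * Z c := by
      rw [← hnew, hB, ← Finset.sum_add_distrib, hZ, Finset.mul_sum]
      refine Finset.sum_le_sum fun S _ => ?_
      rw [add_comm, Finset.sum_add_sum_compl]
      exact hstep _ (isSymm_sum hf S)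
    have hge : (c * (c + 1) : ℝ) * Z (c + 1) ≤ (n - c) * B := by
      have h1 : ((n : ℝ) - c) * B = ∑ S ∈ (Finset.univ : Finset ι).powersetCard c,
          ∑ j ∈ Sᶜ, ∑ i ∈ S, trace (exp ((∑ k ∈ S, f k) + f i)) := by
        rw [hB, Finset.mul_sum]
        refine Finset.sum_congr rfl fun S hS => ?_
        rw [Finset.sum_const, Finset.card_compl, Finset.mem_powersetCard_univ.1 hS, nsmul_eq_mul,
          Nat.cast_sub (by omega)]
      rw [h1, sum_powersetCard_sum_compl c fun S _ =>
        ∑ i ∈ S, trace (exp ((∑ k ∈ S, f k) + f i)), hZ, Finset.mul_sum]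
      exact Finset.sum_le_sum fun T hT =>
        card_mul_trace_exp_sum_le_sum_swap hf (Finset.mem_powersetCard_univ.1 hT)
    have hcn : (0 : ℝ) < n - c := by
      have : ((c + 1 : ℕ) : ℝ) ≤ n := by exact_mod_cast hc
      push_cast at this
      linarith
    have hn0 : (0 : ℝ) < n := by linarith [(Nat.cast_nonneg c : (0 : ℝ) ≤ c)]
    have hrec : (c + 1) * Z (c + 1) ≤ (n - c) * κ * Z c := by
      have h1 := mul_le_mul_of_nonneg_left hle hcn.le
      refine le_of_mul_le_mul_left ?_ hn0
      linarith
    have hchoose : (n.choose (c + 1) : ℝ) * (c + 1) = n.choose c * (n - c) := by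
      have := Nat.choose_succ_right_eq n c
      rw [← Nat.cast_sub (by omega : c ≤ n)]
      exact_mod_cast this
    have hih := mul_le_mul_of_nonneg_left ih (mul_nonneg hcn.le hκ)
    refine le_of_mul_le_mul_left (?_ : ((c : ℝ) + 1) * _ ≤ (c + 1) * _) (by positivity)
    calc ((c : ℝ) + 1) * Z (c + 1) ≤ (n - c) * κ * Z c := hrec
      _ ≤ (n - c) * κ * (n.choose c * κ ^ c * Fintype.card m) := hih
      _ = (n.choose c * (n - c)) * κ ^ (c + 1) * Fintype.card m := by ring
      _ = (c + 1) * (n.choose (c + 1) * κ ^ (c + 1) * Fintype.card m) := by rw [← hchoose]; ring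

omit [Fintype m] [DecidableEq m] in
theorem isSymm_vecMulVec_self (u : m → ℝ) : (vecMulVec u u).IsSymm := transpose_vecMulVec u u

theorem trace_exp_add_smul_vecMulVec_le {A : Matrix m m ℝ} (hA : A.IsSymm) (u : m → ℝ) {M : ℝ}
    (hM : 0 < M) (hu : u ⬝ᵥ u ≤ M) (s : ℝ) :
    trace (exp (A + s • vecMulVec u u)) ≤
      trace (exp A) + (Real.exp (s * M) - 1) / M * trace (exp A * vecMulVec u u) := by
  have hq : 0 ≤ trace (exp A * vecMulVec u u) := by
    rw [trace_mul_vecMulVec_self]; exact dotProduct_exp_mulVec_nonneg hA u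
  have hl0 : 0 ≤ u ⬝ᵥ u := Finset.sum_nonneg fun i _ => mul_self_nonneg _
  rcases hl0.eq_or_lt with hl | hl
  · have : u = 0 := dotProduct_self_eq_zero.1 hl.symm
    simp [this]
  set l := u ⬝ᵥ u with hldef
  have hidem : (l⁻¹ • vecMulVec u u) * (l⁻¹ • vecMulVec u u) = l⁻¹ • vecMulVec u u := by
    rw [smul_mul_smul_comm, vecMulVec_mul_vecMulVec, ← hldef, vecMulVec_smul, smul_smul]
    congr 1
    field_simp
  have hexp : exp (s • vecMulVec u u) = 1 + ((Real.exp (s * l) - 1) / l) • vecMulVec u u := by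
    have := exp_smul_isIdempotentElem hidem (s * l)
    rw [smul_smul, smul_smul, mul_assoc, mul_inv_cancel₀ hl.ne', mul_one] at this
    rw [this, div_eq_mul_inv]
  have hconv : (Real.exp (s * l) - 1) / l ≤ (Real.exp (s * M) - 1) / M := by
    have h := convexOn_exp.2 (Set.mem_univ (s * M)) (Set.mem_univ 0)
      (div_nonneg hl.le hM.le) (sub_nonneg.2 ((div_le_one hM).2 hu)) (by ring)
    have h1 : l / M * (s * M) = s * l := by field_simp
    simp only [smul_eq_mul, mul_zero, add_zero, Real.exp_zero, mul_one, h1] at h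
    rw [div_le_iff₀ hl]
    have h2 : (Real.exp (s * M) - 1) / M * l = l / M * Real.exp (s * M) - l / M := by ring
    linarith
  calc trace (exp (A + s • vecMulVec u u)) ≤ trace (exp A * exp (s • vecMulVec u u)) :=
        trace_exp_add_le hA ((isSymm_vecMulVec_self u).smul s)
    _ = trace (exp A) + (Real.exp (s * l) - 1) / l * trace (exp A * vecMulVec u u) := by
        rw [hexp, mul_add, mul_one, mul_smul_comm, trace_add, trace_smul, smul_eq_mul]
    _ ≤ _ := by gcongr

/-- Lower-tail matrix Chernoff bound for uniform sampling without replacement from the rows of a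
matrix with orthonormal columns. -/
theorem card_filter_exists_quadForm_lt_le {u : ι → m → ℝ}
    (hu : ∑ i, vecMulVec (u i) (u i) = 1) {M : ℝ} (hM : 0 < M) (hl : ∀ i, u i ⬝ᵥ u i ≤ M)
    {θ : ℝ} (hθ : θ ∈ Set.Ioo (0 : ℝ) 1) {c : ℕ} (hc : c ≤ Fintype.card ι) (hn : 0 < Fintype.card ι)
    (p : Finset ι → Prop) [DecidablePred p]
    (hp : ∀ S, p S → ∃ w : m → ℝ, w ⬝ᵥ w ≠ 0 ∧
      ∑ i ∈ S, (u i ⬝ᵥ w) ^ 2 ≤ θ * (c / Fintype.card ι) * (w ⬝ᵥ w)) :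
    ((((Finset.univ : Finset ι).powersetCard c).filter p).card : ℝ) ≤
      (Fintype.card ι).choose c * (Fintype.card m *
        Real.exp (-(c * (θ * Real.log θ - θ + 1) / (Fintype.card ι * M)))) := by
  set n := Fintype.card ι with hndef
  have hn' : (0 : ℝ) < n := by exact_mod_cast hn
  set s := Real.log θ / M with hs
  have hs0 : s < 0 := div_neg_of_neg_of_pos (Real.log_neg hθ.1 hθ.2) hM
  have hsM : Real.exp (s * M) = θ := by
    rw [hs, div_mul_cancel₀ _ hM.ne', Real.exp_log hθ.1]
  set f : ι → Matrix m m ℝ := fun i => s • vecMulVec (u i) (u i) with hf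
  have hfs : ∀ i, (f i).IsSymm := fun i => (isSymm_vecMulVec_self _).smul s
  set κ := Real.exp ((θ - 1) / (n * M)) with hκ
  have hstep : ∀ A : Matrix m m ℝ, A.IsSymm →
      ∑ i, trace (exp (A + f i)) ≤ n * κ * trace (exp A) := by
    intro A hA
    have htr : 0 ≤ trace (exp A) := by
      have := trace_mul_transpose_self_nonneg (exp ((1 / 2 : ℝ) • A))
      rwa [(hA.smul (1 / 2 : ℝ)).exp.eq, exp_half_mul_self] at this
    calc ∑ i, trace (exp (A + f i))
        ≤ ∑ i, (trace (exp A) + (θ - 1) / M * trace (exp A * vecMulVec (u i) (u i))) := by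
          refine Finset.sum_le_sum fun i _ => ?_
          rw [← hsM]
          exact trace_exp_add_smul_vecMulVec_le hA (u i) hM (hl i) s
      _ = n * (1 + (θ - 1) / (n * M)) * trace (exp A) := by
          rw [Finset.sum_add_distrib, Finset.sum_const, ← Finset.mul_sum, ← trace_sum,
            ← Matrix.mul_sum, hu, mul_one, Finset.card_univ, nsmul_eq_mul, ← hndef]
          field_simp
      _ ≤ n * κ * trace (exp A) := by
          gcongr
          rw [add_comm]
          exact Real.add_one_le_exp _
  have hZ := sum_trace_exp_le_choose_mul hfs (Real.exp_pos _).le hstep hc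
  have hnonneg : ∀ S : Finset ι, 0 ≤ trace (exp (∑ i ∈ S, f i)) := fun S => by
    have h := isSymm_sum hfs S
    have := trace_mul_transpose_self_nonneg (exp ((1 / 2 : ℝ) • ∑ i ∈ S, f i))
    rwa [(h.smul (1 / 2 : ℝ)).exp.eq, exp_half_mul_self] at this
  have hbad : ∀ S, p S → Real.exp (s * (θ * (c / n))) ≤ trace (exp (∑ i ∈ S, f i)) := by
    intro S hS
    obtain ⟨w, hw0, hw⟩ := hp S hS
    have hwpos : 0 < w ⬝ᵥ w :=
      lt_of_le_of_ne (Finset.sum_nonneg fun i _ => mul_self_nonneg _) hw0.symm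
    set a := (Real.sqrt (w ⬝ᵥ w))⁻¹ with ha
    have ha2 : a * a * (w ⬝ᵥ w) = 1 := by
      rw [ha, ← mul_inv, Real.mul_self_sqrt hwpos.le, inv_mul_cancel₀ hw0]
    have hv1 : (a • w) ⬝ᵥ (a • w) = 1 := by
      rw [smul_dotProduct, dotProduct_smul, smul_eq_mul, smul_eq_mul, ← mul_assoc, ha2]
    refine le_trans ?_ (exp_dotProduct_mulVec_le_trace_exp (isSymm_sum hfs S) hv1)
    rw [Real.exp_le_exp]
    have hqf : (a • w) ⬝ᵥ ((∑ i ∈ S, f i) *ᵥ (a • w)) =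
        s * (a * a * ∑ i ∈ S, (u i ⬝ᵥ w) ^ 2) := by
      rw [sum_mulVec, dotProduct_sum, Finset.mul_sum, Finset.mul_sum]
      refine Finset.sum_congr rfl fun i _ => ?_
      rw [hf]
      simp only [smul_mulVec, vecMulVec_mulVec, dotProduct_smul, smul_dotProduct, mulVec_smul,
        smul_eq_mul, op_smul_eq_smul]
      rw [dotProduct_comm w (u i)]
      ring
    rw [hqf]
    refine mul_le_mul_of_nonpos_left ?_ hs0.le
    calc a * a * ∑ i ∈ S, (u i ⬝ᵥ w) ^ 2 ≤ a * a * (θ * (c / n) * (w ⬝ᵥ w)) :=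
          mul_le_mul_of_nonneg_left hw (mul_self_nonneg a)
      _ = θ * (c / n) * (a * a * (w ⬝ᵥ w)) := by ring
      _ = θ * (c / n) := by rw [ha2, mul_one]
  have hmarkov : ((((Finset.univ : Finset ι).powersetCard c).filter p).card : ℝ) *
      Real.exp (s * (θ * (c / n))) ≤ n.choose c * κ ^ c * Fintype.card m := by
    refine le_trans ?_ hZ
    rw [← nsmul_eq_mul]
    refine (Finset.card_nsmul_le_sum _ _ _ fun S hS =>
      hbad S (Finset.mem_filter.1 hS).2).trans ?_
    exact Finset.sum_le_sum_of_subset_of_nonneg (Finset.filter_subset _ _) fun S _ _ => hnonneg S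
  rw [← le_div_iff₀ (Real.exp_pos _)] at hmarkov
  refine hmarkov.trans_eq ?_
  rw [div_eq_mul_inv, ← Real.exp_neg, hκ, ← Real.exp_nat_mul]
  rw [show (n.choose c : ℝ) * Real.exp (c * ((θ - 1) / (n * M))) * Fintype.card m *
      Real.exp (-(s * (θ * (c / n)))) = n.choose c * (Fintype.card m *
      (Real.exp (c * ((θ - 1) / (n * M))) * Real.exp (-(s * (θ * (c / n)))))) by ring,
    ← Real.exp_add]
  congr 3
  rw [hs]
  field_simp
  ring

theorem sum_powersetCard_sum_eq (g : ι → ℝ) {c : ℕ} (hc : c ≤ Fintype.card ι) :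
    (Fintype.card ι : ℝ) * ∑ S ∈ (Finset.univ : Finset ι).powersetCard c, ∑ i ∈ S, g i =
      c * (Fintype.card ι).choose c * ∑ i, g i := by
  induction c with
  | zero => simp
  | succ c ih =>
    specialize ih (by omega)
    have hchoose : ((Fintype.card ι).choose (c + 1) : ℝ) * (c + 1) =
        (Fintype.card ι).choose c * (Fintype.card ι - c) := by
      have := Nat.choose_succ_right_eq (Fintype.card ι) c
      rw [← Nat.cast_sub (by omega : c ≤ Fintype.card ι)]
      exact_mod_cast this
    have hcompl : ∀ S : Finset ι, ∑ i ∈ Sᶜ, g i = ∑ i, g i - ∑ i ∈ S, g i := fun S => by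
      rw [← Finset.sum_add_sum_compl S]; ring
    rw [← sum_powersetCard_sum_compl c fun _ i => g i, Finset.sum_congr rfl fun S _ => hcompl S,
      Finset.sum_sub_distrib, mul_sub, ih, Finset.sum_const, Finset.card_powersetCard,
      Finset.card_univ, nsmul_eq_mul]
    push_cast
    linear_combination (-∑ i, g i) * hchoose

/-- Markov's inequality for a sum sampled uniformly without replacement. -/
theorem card_filter_lt_sum_le {g : ι → ℝ} (hg : ∀ i, 0 ≤ g i) {c : ℕ} (hc0 : 0 < c)
    (hc : c ≤ Fintype.card ι) {δ : ℝ} (hδ : 0 < δ) (p : Finset ι → Prop) [DecidablePred p]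
    (hp : ∀ S, p S → c / Fintype.card ι * ((∑ i, g i) / δ) < ∑ i ∈ S, g i) :
    ((((Finset.univ : Finset ι).powersetCard c).filter p).card : ℝ) ≤
      (Fintype.card ι).choose c * δ := by
  set n := Fintype.card ι with hndef
  have hc' : (0 : ℝ) < c := by exact_mod_cast hc0
  have hn' : (0 : ℝ) < n := by exact_mod_cast hc0.trans_le hc
  have hR : 0 ≤ ∑ i, g i := Finset.sum_nonneg fun i _ => hg i
  rcases hR.eq_or_lt with h0 | hpos
  · have : ((Finset.univ : Finset ι).powersetCard c).filter p = ∅ := by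
      refine Finset.filter_eq_empty_iff.2 fun S _ hS => ?_
      have h1 := hp S hS
      have h2 : ∑ i ∈ S, g i ≤ ∑ i, g i :=
        Finset.sum_le_sum_of_subset_of_nonneg (Finset.subset_univ S) fun i _ _ => hg i
      rw [← h0, zero_div, mul_zero] at h1
      linarith
    rw [this]
    simp only [Finset.card_empty, Nat.cast_zero]
    positivity
  · have hmarkov : ((((Finset.univ : Finset ι).powersetCard c).filter p).card : ℝ) *
        (c / n * ((∑ i, g i) / δ)) ≤
        ∑ S ∈ (Finset.univ : Finset ι).powersetCard c, ∑ i ∈ S, g i := by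
      rw [← nsmul_eq_mul]
      refine (Finset.card_nsmul_le_sum _ _ _ fun S hS =>
        (hp S (Finset.mem_filter.1 hS).2).le).trans ?_
      exact Finset.sum_le_sum_of_subset_of_nonneg (Finset.filter_subset _ _) fun S _ _ =>
        Finset.sum_nonneg fun i _ => hg i
    have hsum := sum_powersetCard_sum_eq g hc
    rw [← hndef] at hsum
    have hsum' : ∑ S ∈ (Finset.univ : Finset ι).powersetCard c, ∑ i ∈ S, g i =
        (n.choose c * δ) * (c / n * ((∑ i, g i) / δ)) := by
      field_simp
      linarith
    rw [hsum'] at hmarkov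
    exact le_of_mul_le_mul_right hmarkov (by positivity)

end SamplingWithoutReplacement

section LeastSquares

theorem sum_sq_le_of_forall_sum_sq_le {ι : Type*} (S : Finset ι) (r p : ι → ℝ)
    (h : ∀ t : ℝ, ∑ i ∈ S, (r i + p i) ^ 2 ≤ ∑ i ∈ S, (r i + p i - t * p i) ^ 2) :
    ∑ i ∈ S, p i ^ 2 ≤ ∑ i ∈ S, r i ^ 2 := by
  set P := ∑ i ∈ S, p i ^ 2 with hP
  set I := ∑ i ∈ S, r i * p i with hI
  set R := ∑ i ∈ S, r i ^ 2 with hR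
  have hexpand : ∀ t : ℝ, ∑ i ∈ S, (r i + p i - t * p i) ^ 2 =
      R + 2 * (1 - t) * I + (1 - t) ^ 2 * P := fun t => by
    rw [hR, hI, hP, Finset.mul_sum, Finset.mul_sum, ← Finset.sum_add_distrib,
      ← Finset.sum_add_distrib]
    exact Finset.sum_congr rfl fun i _ => by ring
  have h' : ∀ t : ℝ, R + 2 * I + P ≤ R + 2 * (1 - t) * I + (1 - t) ^ 2 * P := fun t => by
    rw [← hexpand t]
    refine le_trans (le_of_eq ?_) (h t)
    have := hexpand 0
    simp only [zero_mul, sub_zero] at this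
    rw [this]
    ring
  have hP0 : 0 ≤ P := Finset.sum_nonneg fun i _ => sq_nonneg _
  have hR0 : 0 ≤ R := Finset.sum_nonneg fun i _ => sq_nonneg _
  rcases hP0.eq_or_lt with h0 | hpos
  · rw [← h0]; exact hR0
  have ht := h' ((I + P) / P)
  have hIP : (I + P) ^ 2 ≤ 0 := by
    have h1 : R + 2 * (1 - (I + P) / P) * I + (1 - (I + P) / P) ^ 2 * P
        = R + 2 * I + P - (I + P) ^ 2 / P := by
      field_simp
      ring
    rw [h1] at ht
    have h2 : (I + P) ^ 2 / P ≤ 0 := by linarith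
    by_contra hcon
    push Not at hcon
    exact absurd h2 (not_le.2 (div_pos hcon hpos))
  have hIeq : I + P = 0 := pow_eq_zero_iff (two_ne_zero) |>.1 (le_antisymm hIP (sq_nonneg _))
  have hnn : 0 ≤ ∑ i ∈ S, (r i + p i) ^ 2 := Finset.sum_nonneg fun i _ => sq_nonneg _
  have := hexpand 0
  simp only [zero_mul, sub_zero] at this
  rw [this] at hnn
  linarith

variable {n d : ℕ} {X U : Matrix (Fin n) (Fin d) ℝ}

theorem mulVec_eq_mulVec_transpose_mul_mulVec (hU : Uᵀ * U = 1)
    (hcol : LinearMap.range U.mulVecLin = LinearMap.range X.mulVecLin) (β : Fin d → ℝ) :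
    X *ᵥ β = U *ᵥ ((Uᵀ * X) *ᵥ β) := by
  have hmem : X *ᵥ β ∈ LinearMap.range U.mulVecLin := by
    rw [hcol]; exact ⟨β, rfl⟩
  obtain ⟨z, hz⟩ := hmem
  rw [mulVecLin_apply] at hz
  rw [← mulVec_mulVec, ← hz, mulVec_mulVec _ Uᵀ, hU, one_mulVec]

theorem mulVec_leastSquares (hrank : X.rank = d) (hU : Uᵀ * U = 1)
    (hcol : LinearMap.range U.mulVecLin = LinearMap.range X.mulVecLin) (y : Fin n → ℝ) :
    X *ᵥ (((Xᵀ * X)⁻¹ * Xᵀ) *ᵥ y) = (U * Uᵀ) *ᵥ y := by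
  set β := ((Xᵀ * X)⁻¹ * Xᵀ) *ᵥ y with hβ
  have hunit : IsUnit (Xᵀ * X) := by
    rw [← mulVec_surjective_iff_isUnit]
    have hr : (Xᵀ * X).rank = d := by rw [rank_transpose_mul_self, hrank]
    refine LinearMap.range_eq_top (f := (Xᵀ * X).mulVecLin).1 ?_
    exact Submodule.eq_top_of_finrank_eq (hr.trans (by simp))
  have hnormal : Xᵀ *ᵥ (X *ᵥ β - y) = 0 := by
    rw [mulVec_sub, hβ, mulVec_mulVec, mulVec_mulVec, ← Matrix.mul_assoc (Xᵀ * X),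
      mul_nonsing_inv _ ((isUnit_iff_isUnit_det _).1 hunit), Matrix.one_mul, sub_self]
  have hUn : Uᵀ *ᵥ (X *ᵥ β - y) = 0 := by
    set z := Uᵀ *ᵥ (X *ᵥ β - y) with hz
    have hmem : U *ᵥ z ∈ LinearMap.range X.mulVecLin := by
      rw [← hcol]; exact ⟨z, rfl⟩
    obtain ⟨b, hb⟩ := hmem
    rw [mulVecLin_apply] at hb
    rw [← dotProduct_self_eq_zero]
    nth_rw 2 [hz]
    rw [dotProduct_mulVec, vecMul_transpose, ← hb, ← vecMul_transpose, ← dotProduct_mulVec, hnormal,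
      dotProduct_zero]
  rw [mulVec_sub, sub_eq_zero] at hUn
  rw [mulVec_eq_mulVec_transpose_mul_mulVec hU hcol, ← mulVec_mulVec, hUn, mulVec_mulVec]

end LeastSquares

/-- Uniform-sampling least squares, key probabilistic bound: with probability at least
`1 − δ₁ − δ₂ − δ₃` over a uniform `c`-subset `C`, every minimizer `β̃` of
`β ↦ Σ_{i∈C}(y_i − x^(i)β)²` satisfies
`‖UᵀX(β_lsr − β̃)‖ ≤ (1/θ₁)·√(θ₂/δ₃)·‖(I − UUᵀ)y‖`. -/
theorem stmt_13 {n d : ℕ} (hdn : d ≤ n)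
    (X : Matrix (Fin n) (Fin d) ℝ) (hrank : X.rank = d)
    (y : Fin n → ℝ)
    (U : Matrix (Fin n) (Fin d) ℝ) (hU : Uᵀ * U = 1)
    (hcol : LinearMap.range U.mulVecLin = LinearMap.range X.mulVecLin)
    (βlsr : Fin d → ℝ) (hβ : βlsr = ((Xᵀ * X)⁻¹ * Xᵀ).mulVec y)
    (μ : ℝ) (hμ : μ = ((n : ℝ) / d) * ⨆ i : Fin n, ∑ j, U i j ^ 2)
    (θ₁ θ₂ δ₁ δ₂ δ₃ : ℝ)
    (hθ₁ : θ₁ ∈ Set.Ioo (0 : ℝ) 1) (hθ₂ : 1 < θ₂)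
    (hδ₁ : δ₁ ∈ Set.Ioo (0 : ℝ) 1) (hδ₂ : δ₂ ∈ Set.Ioo (0 : ℝ) 1)
    (hδ₃ : δ₃ ∈ Set.Ioo (0 : ℝ) 1)
    (c : ℕ) (hcn : c ≤ n)
    (hc1 : μ * d * Real.log (d / δ₁) ≤ c * (θ₁ * Real.log θ₁ - θ₁ + 1))
    (hc2 : μ * d * Real.log (d / δ₂) ≤ c * (θ₂ * Real.log θ₂ - θ₂ + 1))
    (obj : Finset (Fin n) → (Fin d → ℝ) → ℝ)
    (hobj : obj = fun s β => ∑ i ∈ s, (y i - ∑ j, X i j * β j) ^ 2) :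
    1 - δ₁ - δ₂ - δ₃ ≤
      (((Finset.univ : Finset (Fin n)).powersetCard c).filter
            (fun s => ∀ βt : Fin d → ℝ, (∀ β, obj s βt ≤ obj s β) →
              vnorm ((Uᵀ * X).mulVec (βlsr - βt))
                ≤ (1 / θ₁) * Real.sqrt (θ₂ / δ₃) * vnorm (y - (U * Uᵀ).mulVec y))).card
        / (n.choose c : ℝ) := by
  have hCpos : (0 : ℝ) < n.choose c := by exact_mod_cast Nat.choose_pos hcn
  set good : Finset (Fin n) → Prop := fun s => ∀ βt : Fin d → ℝ, (∀ β, obj s βt ≤ obj s β) →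
    vnorm ((Uᵀ * X).mulVec (βlsr - βt))
      ≤ (1 / θ₁) * Real.sqrt (θ₂ / δ₃) * vnorm (y - (U * Uᵀ).mulVec y) with hgood
  suffices hbad : ((((Finset.univ : Finset (Fin n)).powersetCard c).filter
      fun s => ¬ good s).card : ℝ) ≤ n.choose c * (δ₁ + δ₃) by
    have hsplit := Finset.card_filter_add_card_filter_not
      (s := (Finset.univ : Finset (Fin n)).powersetCard c) good
    rw [Finset.card_powersetCard, Finset.card_univ, Fintype.card_fin] at hsplit
    have hsplit' : ((((Finset.univ : Finset (Fin n)).powersetCard c).filter good).card : ℝ) +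
        (((Finset.univ : Finset (Fin n)).powersetCard c).filter fun s => ¬ good s).card =
        n.choose c := by exact_mod_cast hsplit
    rw [le_div_iff₀ hCpos]
    nlinarith [hδ₂.1]
  rcases Nat.eq_zero_or_pos d with hd | hd
  · subst hd
    have hall : ((Finset.univ : Finset (Fin n)).powersetCard c).filter (fun s => ¬ good s) = ∅ := by
      refine Finset.filter_eq_empty_iff.2 fun s _ hs => hs fun βt _ => ?_
      have h0 : vnorm ((Uᵀ * X).mulVec (βlsr - βt)) = 0 := by simp [vnorm]
      rw [h0]
      have := hθ₁.1
      exact mul_nonneg (mul_nonneg (by positivity) (Real.sqrt_nonneg _)) (Real.sqrt_nonneg _)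
    refine le_of_eq_of_le (by simpa using hall) (?_ : (0 : ℝ) ≤ _)
    exact mul_nonneg hCpos.le (add_nonneg hδ₁.1.le hδ₃.1.le)
  have hn : 0 < n := hd.trans_le hdn
  have hd' : (0 : ℝ) < d := by exact_mod_cast hd
  have hn' : (0 : ℝ) < n := by exact_mod_cast hn
  set M : ℝ := ⨆ i : Fin n, ∑ j, U i j ^ 2 with hMdef
  have hlM : ∀ i, U i ⬝ᵥ U i ≤ M := fun i => by
    have h : U i ⬝ᵥ U i = ∑ j, U i j ^ 2 := Finset.sum_congr rfl fun j _ => (pow_two _).symm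
    rw [h]
    exact le_ciSup (f := fun i : Fin n => ∑ j, U i j ^ 2) (Set.finite_range _).bddAbove i
  have hUsum : ∑ i, vecMulVec (U i) (U i) = 1 := by
    rw [← hU]
    ext a b
    simp [Matrix.sum_apply, vecMulVec_apply, mul_apply]
  have hM : 0 < M := by
    have h1 : (d : ℝ) = ∑ i, U i ⬝ᵥ U i := by
      have := congrArg trace hUsum
      rw [trace_sum, trace_one, Fintype.card_fin] at this
      rw [← this]
      exact Finset.sum_congr rfl fun i _ => trace_vecMulVec _ _
    have h2 : (d : ℝ) ≤ n * M := by
      rw [h1]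
      refine (Finset.sum_le_sum fun i _ => hlM i).trans_eq ?_
      simp
    exact pos_of_mul_pos_right (hd'.trans_le h2) hn'.le
  have hμd : μ * d = n * M := by rw [hμ]; field_simp
  have hdδ : 0 < Real.log (d / δ₁) := by
    refine Real.log_pos ((one_lt_div hδ₁.1).2 (hδ₁.2.trans_le ?_))
    exact_mod_cast hd
  have hc : 0 < c := by
    rcases Nat.eq_zero_or_pos c with h | h
    · rw [h, hμd, Nat.cast_zero, zero_mul] at hc1
      exact absurd hc1 (not_le.2 (by positivity))
    · exact h
  have hc' : (0 : ℝ) < c := by exact_mod_cast hc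
  have hδbound : (d : ℝ) * Real.exp (-(c * (θ₁ * Real.log θ₁ - θ₁ + 1) / (n * M))) ≤ δ₁ := by
    have h1 : Real.log (d / δ₁) ≤ c * (θ₁ * Real.log θ₁ - θ₁ + 1) / (n * M) := by
      rw [le_div_iff₀ (by positivity), ← hμd]
      linarith
    calc (d : ℝ) * Real.exp (-(c * (θ₁ * Real.log θ₁ - θ₁ + 1) / (n * M)))
        ≤ d * Real.exp (-Real.log (d / δ₁)) := by gcongr
      _ = δ₁ := by
        rw [Real.exp_neg, Real.exp_log (div_pos hd' hδ₁.1)]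
        field_simp
  set r : Fin n → ℝ := y - (U * Uᵀ) *ᵥ y with hr
  set small : Finset (Fin n) → Prop := fun S => ∃ w : Fin d → ℝ, w ⬝ᵥ w ≠ 0 ∧
    ∑ i ∈ S, (U i ⬝ᵥ w) ^ 2 ≤ θ₁ * (c / n) * (w ⬝ᵥ w) with hsmall
  set large : Finset (Fin n) → Prop := fun S =>
    c / n * ((∑ i, r i ^ 2) / δ₃) < ∑ i ∈ S, r i ^ 2 with hlarge
  have hcard_small := card_filter_exists_quadForm_lt_le hUsum hM hlM hθ₁ (c := c)
    (by rwa [Fintype.card_fin]) (by rwa [Fintype.card_fin]) small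
    (fun S hS => by rw [Fintype.card_fin]; exact hS)
  have hcard_large := card_filter_lt_sum_le (fun i => sq_nonneg (r i)) hc
    (by rwa [Fintype.card_fin]) hδ₃.1 large (fun S hS => by rw [Fintype.card_fin]; exact hS)
  rw [Fintype.card_fin, Fintype.card_fin] at hcard_small
  rw [Fintype.card_fin] at hcard_large
  have hgood_of : ∀ S, ¬ small S → ¬ large S → good S := by
    intro S hs hl βt hmin
    set w := (Uᵀ * X) *ᵥ (βlsr - βt) with hw
    have hp : X *ᵥ (βlsr - βt) = U *ᵥ w := mulVec_eq_mulVec_transpose_mul_mulVec hU hcol _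
    have hres : ∀ i, (X *ᵥ βt) i = y i - r i - U i ⬝ᵥ w := fun i => by
      have h1 : X *ᵥ βlsr = (U * Uᵀ) *ᵥ y := by rw [hβ]; exact mulVec_leastSquares hrank hU hcol y
      have h2 := congrFun hp i
      rw [mulVec_sub, h1, Pi.sub_apply] at h2
      have h3 : (U *ᵥ w) i = U i ⬝ᵥ w := rfl
      rw [hr, Pi.sub_apply]
      linarith
    have hfit : ∑ i ∈ S, (U i ⬝ᵥ w) ^ 2 ≤ ∑ i ∈ S, r i ^ 2 := by
      refine sum_sq_le_of_forall_sum_sq_le S r _ fun t => ?_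
      have h := hmin (βt + t • (βlsr - βt))
      rw [hobj] at h
      refine le_of_eq_of_le (Finset.sum_congr rfl fun i _ => ?_)
        (h.trans_eq (Finset.sum_congr rfl fun i _ => ?_))
      · have h1 : ∑ j, X i j * βt j = (X *ᵥ βt) i := rfl
        rw [h1, hres]
        ring
      · have h1 : ∑ j, X i j * (βt + t • (βlsr - βt)) j =
            (X *ᵥ (βt + t • (βlsr - βt))) i := rfl
        have h3 : (U *ᵥ w) i = U i ⬝ᵥ w := rfl
        rw [h1, mulVec_add, mulVec_smul, hp, Pi.add_apply, Pi.smul_apply, hres, h3, smul_eq_mul]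
        ring
    have hww : w ⬝ᵥ w = ∑ j, w j ^ 2 := Finset.sum_congr rfl fun j _ => (pow_two _).symm
    have hR0 : 0 ≤ ∑ i, r i ^ 2 := Finset.sum_nonneg fun i _ => sq_nonneg _
    have hθ0 := hθ₁.1
    have hδ0 := hδ₃.1
    have hkey : ∑ j, w j ^ 2 ≤ (1 / θ₁) ^ 2 * (θ₂ / δ₃) * ∑ i, r i ^ 2 := by
      rw [← hww]
      by_cases hw0 : w ⬝ᵥ w = 0
      · rw [hw0]; positivity
      have h1 : θ₁ * (c / n) * (w ⬝ᵥ w) < ∑ i ∈ S, (U i ⬝ᵥ w) ^ 2 :=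
        not_le.1 fun hle => hs ⟨w, hw0, hle⟩
      have h2 : θ₁ * (c / n) * (w ⬝ᵥ w) ≤ c / n * ((∑ i, r i ^ 2) / δ₃) :=
        h1.le.trans (hfit.trans (not_lt.1 hl))
      have h3 : θ₁ * (w ⬝ᵥ w) ≤ (∑ i, r i ^ 2) / δ₃ := by
        refine le_of_mul_le_mul_left ?_ (div_pos hc' hn')
        linarith
      have h4 : w ⬝ᵥ w ≤ (1 / θ₁) * ((∑ i, r i ^ 2) / δ₃) := by
        rw [one_div, ← div_eq_inv_mul, le_div_iff₀ hθ0]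
        linarith
      have h5 : 1 ≤ (1 / θ₁) * θ₂ := by
        rw [one_div, ← div_eq_inv_mul, one_le_div hθ0]
        linarith [hθ₁.2]
      calc w ⬝ᵥ w ≤ (1 / θ₁) * ((∑ i, r i ^ 2) / δ₃) := h4
        _ ≤ (1 / θ₁) * ((∑ i, r i ^ 2) / δ₃) * ((1 / θ₁) * θ₂) :=
          le_mul_of_one_le_right (by positivity) h5
        _ = (1 / θ₁) ^ 2 * (θ₂ / δ₃) * ∑ i, r i ^ 2 := by ring
    have hθ₂0 : 0 ≤ θ₂ / δ₃ := div_nonneg (by linarith) hδ0.le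
    calc vnorm w ≤ Real.sqrt ((1 / θ₁) ^ 2 * (θ₂ / δ₃) * ∑ i, r i ^ 2) := Real.sqrt_le_sqrt hkey
      _ = (1 / θ₁) * Real.sqrt (θ₂ / δ₃) * vnorm r := by
        rw [vnorm, Real.sqrt_mul (by positivity), Real.sqrt_mul (by positivity),
          Real.sqrt_sq (by positivity)]
  have hsub : ((Finset.univ : Finset (Fin n)).powersetCard c).filter (fun s => ¬ good s) ⊆
      ((Finset.univ : Finset (Fin n)).powersetCard c).filter small ∪
      ((Finset.univ : Finset (Fin n)).powersetCard c).filter large := by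
    intro S hS
    rw [Finset.mem_filter] at hS
    rw [Finset.mem_union, Finset.mem_filter, Finset.mem_filter]
    by_contra hcon
    push Not at hcon
    exact hS.2 (hgood_of S (hcon.1 hS.1) (hcon.2 hS.1))
  have hcard := (Finset.card_le_card hsub).trans (Finset.card_union_le _ _)
  have hcard' : ((((Finset.univ : Finset (Fin n)).powersetCard c).filter
      fun s => ¬ good s).card : ℝ) ≤
      (((Finset.univ : Finset (Fin n)).powersetCard c).filter small).card +
      (((Finset.univ : Finset (Fin n)).powersetCard c).filter large).card := by
    exact_mod_cast hcard
  have := mul_le_mul_of_nonneg_left hδbound hCpos.le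
  linarith
end
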